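/- For every n∈ℕ, W>0, λ₀∈(−2,2) and ξ₁,ξ₂∈ℝ: F₂(λ₀+ξ₁/(Nρ(λ₀)), λ₀+ξ₂/(Nρ(λ₀))) = −(2π²)^{−N}·(det J)^{−2}·∫ exp{−(W²/2)∑_{j=−n+1}^{n}Tr(X_j−X_{j−1})²}·exp{−(1/2)∑_{j=−n}^{n}Tr(X_j+iΛ₀/2+i ξ̂/(Nρ(λ₀)))²}·∏_{j=−n}^{n}det(X_j−iΛ₀/2) ∏_{j=−n}^{n}dX_j, where the (absolutely convergent) integral runs over N-tuples (X_{−n},…,X_n) of 2×2 Hermitian matrices, dX_j=d(X_j)_{11}·d(X_j)_{22}·dRe(X_j)_{12}·dIm(X_j)_{12}, Λ₀=diag(λ₀,λ₀), and ξ̂=diag(ξ₁,ξ₂). -/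

import Mathlib

open MeasureTheory

/-- The `N×N` matrix `−Δ` (discrete Neumann Laplacian): symmetric tridiagonal,
diagonal `(1,2,…,2,1)`, sub/superdiagonal `−1`. -/
noncomputable def negLap (m : ℕ) : Matrix (Fin m) (Fin m) ℝ :=
  Matrix.of fun i j =>
    if i = j then 2 - (if (i : ℕ) = 0 then 1 else 0) - (if (i : ℕ) = m - 1 then 1 else 0)
    else if (i : ℕ) + 1 = (j : ℕ) ∨ (j : ℕ) + 1 = (i : ℕ) then -1 else 0

/-- `J = (−W²Δ + 1)^{−1}`. -/
noncomputable def Jmat (n : ℕ) (W : ℝ) : Matrix (Fin (2*n+1)) (Fin (2*n+1)) ℝ :=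
  (W^2 • negLap (2*n+1) + 1)⁻¹

/-- The Hermitian band matrix built from diagonal entries `d` and, for `i<j`, real and
imaginary parts `o ⟨(i,j)⟩ = (Re H_{ij}, Im H_{ij})` of the off-diagonal entries. -/
noncomputable def bandH (n : ℕ) (d : Fin (2*n+1) → ℝ)
    (o : {q : Fin (2*n+1) × Fin (2*n+1) // q.1 < q.2} → ℝ × ℝ) :
    Matrix (Fin (2*n+1)) (Fin (2*n+1)) ℂ :=
  Matrix.of fun i j =>
    if h : i < j then ⟨(o ⟨(i, j), h⟩).1, (o ⟨(i, j), h⟩).2⟩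
    else if h' : j < i then ⟨(o ⟨(j, i), h'⟩).1, -((o ⟨(j, i), h'⟩).2)⟩
    else ((d i : ℝ) : ℂ)

/-- The Gaussian density of the 1D band-matrix ensemble: the `H_{ii}` are independent centered
real Gaussians of variance `J_{ii}` and, for `i<j`, `Re H_{ij}`, `Im H_{ij}` are independent
centered Gaussians of variance `J_{ij}/2`. -/
noncomputable def bandDens (n : ℕ) (W : ℝ) (d : Fin (2*n+1) → ℝ)
    (o : {q : Fin (2*n+1) × Fin (2*n+1) // q.1 < q.2} → ℝ × ℝ) : ℝ :=
  (∏ i, (Real.sqrt (2 * Real.pi * Jmat n W i i))⁻¹ *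
      Real.exp (-(d i)^2 / (2 * Jmat n W i i))) *
  ∏ q : {q : Fin (2*n+1) × Fin (2*n+1) // q.1 < q.2},
    (Real.pi * Jmat n W q.1.1 q.1.2)⁻¹ *
      Real.exp (-(((o q).1)^2 + ((o q).2)^2) / Jmat n W q.1.1 q.1.2)

/-- `F₂(λ₁,λ₂) = E{det(λ₁−H)·det(λ₂−H)}` for the 1D band-matrix ensemble. -/
noncomputable def F2 (n : ℕ) (W : ℝ) (l1 l2 : ℝ) : ℂ :=
  ∫ ω : (Fin (2*n+1) → ℝ) × ({q : Fin (2*n+1) × Fin (2*n+1) // q.1 < q.2} → ℝ × ℝ),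
    ((bandDens n W ω.1 ω.2 : ℝ) : ℂ) *
      ((l1 : ℂ) • (1 : Matrix (Fin (2*n+1)) (Fin (2*n+1)) ℂ) - bandH n ω.1 ω.2).det *
      ((l2 : ℂ) • (1 : Matrix (Fin (2*n+1)) (Fin (2*n+1)) ℂ) - bandH n ω.1 ω.2).det

/-- `ρ(λ) = √(4−λ²)/(2π)`. -/
noncomputable def rho (l : ℝ) : ℝ := Real.sqrt (4 - l^2) / (2 * Real.pi)

/-- A 2×2 Hermitian matrix parametrized by `(v 0, v 1) = ` diagonal and
`v 2 + i v 3 = ` off-diagonal entry. -/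
noncomputable def herm2 (v : Fin 4 → ℝ) : Matrix (Fin 2) (Fin 2) ℂ :=
  !![((v 0 : ℝ) : ℂ), ⟨v 2, v 3⟩; ⟨v 2, -(v 3)⟩, ((v 1 : ℝ) : ℂ)]

/-- The sequence `X_{−n},…,X_n` of Hermitian 2×2 matrices (indexed through `ℕ`, extended
by `0` out of range). -/
noncomputable def Xseq (n : ℕ) (t : Fin (2*n+1) → Fin 4 → ℝ) (j : ℕ) :
    Matrix (Fin 2) (Fin 2) ℂ :=
  if h : j < 2*n+1 then herm2 (t ⟨j, h⟩) else 0

/-- The integrand of the integral representation (1.18)/(2.10):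
`exp{−(W²/2)∑Tr(X_j−X_{j−1})² − (1/2)∑Tr(X_j+iΛ₀/2+iξ̂/(Nρ))²}·∏det(X_j−iΛ₀/2)`. -/
noncomputable def G1 (n : ℕ) (W l0 ξ₁ ξ₂ : ℝ) (t : Fin (2*n+1) → Fin 4 → ℝ) : ℂ :=
  Complex.exp
    (-(((W : ℝ) : ℂ)^2/2) * ∑ j ∈ Finset.Ico 1 (2*n+1),
        ((Xseq n t j - Xseq n t (j-1))^2).trace
      - (1/2 : ℂ) * ∑ j ∈ Finset.range (2*n+1),
        ((Xseq n t j + (Complex.I * (l0 : ℂ)/2) • (1 : Matrix (Fin 2) (Fin 2) ℂ)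
            + (Complex.I / (((2*n+1 : ℝ) * rho l0 : ℝ) : ℂ)) •
              Matrix.diagonal ![((ξ₁ : ℝ) : ℂ), ((ξ₂ : ℝ) : ℂ)])^2).trace)
  * ∏ j ∈ Finset.range (2*n+1),
      (Xseq n t j - (Complex.I * (l0 : ℂ)/2) • (1 : Matrix (Fin 2) (Fin 2) ℂ)).det


/-- continuous, of polynomial growth -/
def PolyG {E : Type*} [NormedAddCommGroup E] (f : E → ℂ) : Prop :=
  Continuous f ∧ ∃ (C : ℝ) (m : ℕ), ∀ x, ‖f x‖ ≤ C * (1 + ‖x‖) ^ m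

section general
variable {E : Type*} [NormedAddCommGroup E]

lemma PolyG.const (c : ℂ) : PolyG (fun _ : E => c) :=
  ⟨continuous_const, ‖c‖, 0, fun x => by simp⟩

lemma PolyG.mul {f g : E → ℂ} (hf : PolyG f) (hg : PolyG g) : PolyG (fun x => f x * g x) := by
  obtain ⟨hfc, C, m, hC⟩ := hf
  obtain ⟨hgc, D, k, hD⟩ := hg
  refine ⟨hfc.mul hgc, C * D, m + k, fun x => ?_⟩
  rw [norm_mul]
  calc ‖f x‖ * ‖g x‖ ≤ (C * (1 + ‖x‖) ^ m) * (D * (1 + ‖x‖) ^ k) :=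
        mul_le_mul (hC x) (hD x) (norm_nonneg _) ((norm_nonneg _).trans (hC x))
    _ = _ := by ring

lemma PolyG.add {f g : E → ℂ} (hf : PolyG f) (hg : PolyG g) : PolyG (fun x => f x + g x) := by
  obtain ⟨hfc, C, m, hC⟩ := hf
  obtain ⟨hgc, D, k, hD⟩ := hg
  have hC0 : 0 ≤ C := by simpa using (norm_nonneg _).trans (hC 0)
  have hD0 : 0 ≤ D := by simpa using (norm_nonneg _).trans (hD 0)
  refine ⟨hfc.add hgc, C + D, m + k, fun x => ?_⟩
  have h1 : (1 : ℝ) ≤ 1 + ‖x‖ := by linarith [norm_nonneg x]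
  have h2 : (1 + ‖x‖) ^ m ≤ (1 + ‖x‖) ^ (m + k) := pow_le_pow_right₀ h1 (by omega)
  have h3 : (1 + ‖x‖) ^ k ≤ (1 + ‖x‖) ^ (m + k) := pow_le_pow_right₀ h1 (by omega)
  calc ‖f x + g x‖ ≤ ‖f x‖ + ‖g x‖ := norm_add_le _ _
    _ ≤ C * (1 + ‖x‖) ^ m + D * (1 + ‖x‖) ^ k := add_le_add (hC x) (hD x)
    _ ≤ C * (1 + ‖x‖) ^ (m + k) + D * (1 + ‖x‖) ^ (m + k) := by gcongr
    _ = _ := by ring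

lemma PolyG.sum {ι : Type*} (s : Finset ι) {f : ι → E → ℂ} (hf : ∀ i, PolyG (f i)) :
    PolyG (fun x => ∑ i ∈ s, f i x) := by
  classical
  induction s using Finset.induction_on with
  | empty => simpa using PolyG.const (E := E) 0
  | insert a s ha ih => simpa [Finset.sum_insert ha] using (hf a).add ih

lemma PolyG.prod {ι : Type*} (s : Finset ι) {f : ι → E → ℂ} (hf : ∀ i, PolyG (f i)) :
    PolyG (fun x => ∏ i ∈ s, f i x) := by
  classical
  induction s using Finset.induction_on with
  | empty => simpa using PolyG.const (E := E) 1
  | insert a s ha ih => simpa [Finset.prod_insert ha] using (hf a).mul ih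

lemma PolyG.ofReal [NormedSpace ℝ E] (f : E →L[ℝ] ℝ) : PolyG (fun x => ((f x : ℝ) : ℂ)) := by
  refine ⟨by fun_prop, ‖f‖, 1, fun x => ?_⟩
  rw [Complex.norm_real, pow_one]
  refine (f.le_opNorm x).trans ?_
  gcongr
  linarith

variable [NormedSpace ℝ E] [FiniteDimensional ℝ E] [MeasurableSpace E] [BorelSpace E]
  {μ : Measure E} [μ.IsAddHaarMeasure]

lemma PolyG.integrable {f w : E → ℂ} (hf : PolyG f) (hw : Continuous w) {K ε : ℝ} (hε : 0 < ε)
    (hb : ∀ x, ‖w x‖ ≤ K * Real.exp (-ε * ‖x‖ ^ 2)) :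
    Integrable (fun x => f x * w x) μ := by
  obtain ⟨hfc, C, m, hC⟩ := hf
  have hC0 : 0 ≤ C := by simpa using (norm_nonneg _).trans (hC 0)
  have hK0 : 0 ≤ K := by simpa using (norm_nonneg _).trans (hb 0)
  set d := Module.finrank ℝ E
  have hI := integrable_one_add_norm (E := E) (μ := μ) (r := ((d + 1 : ℕ) : ℝ))
    (by push_cast; linarith)
  refine Integrable.mono' (hI.const_mul
    (C * K * ((m + (d + 1)).factorial * Real.exp (1 + 1 / (4 * ε))))) (hfc.mul hw).aestronglyMeasurable
    (Filter.Eventually.of_forall fun x => ?_)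
  have h1 : (0 : ℝ) < 1 + ‖x‖ := by linarith [norm_nonneg x]
  rw [Real.rpow_neg h1.le, Real.rpow_natCast, norm_mul]
  have h2 : (1 + ‖x‖) ^ (m + (d + 1)) ≤ (m + (d + 1)).factorial * Real.exp (1 + ‖x‖) := by
    have := Real.pow_div_factorial_le_exp (1 + ‖x‖) h1.le (m + (d + 1))
    rwa [div_le_iff₀' (by positivity)] at this
  have h3 : (1 + ‖x‖) + -ε * ‖x‖ ^ 2 ≤ 1 + 1 / (4 * ε) := by
    have : 1 / (4 * ε) - ‖x‖ + ε * ‖x‖ ^ 2 = ε * (‖x‖ - 1 / (2 * ε)) ^ 2 := by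
      field_simp; ring
    have h := mul_nonneg hε.le (sq_nonneg (‖x‖ - 1 / (2 * ε)))
    linarith
  rw [← div_eq_mul_inv, le_div_iff₀ (by positivity)]
  calc ‖f x‖ * ‖w x‖ * (1 + ‖x‖) ^ (d + 1)
      ≤ (C * (1 + ‖x‖) ^ m) * (K * Real.exp (-ε * ‖x‖ ^ 2)) * (1 + ‖x‖) ^ (d + 1) := by
        gcongr
        · exact hC x
        · exact hb x
    _ = C * K * ((1 + ‖x‖) ^ (m + (d + 1)) * Real.exp (-ε * ‖x‖ ^ 2)) := by ring
    _ ≤ C * K * ((m + (d + 1)).factorial * Real.exp (1 + ‖x‖) * Real.exp (-ε * ‖x‖ ^ 2)) := by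
        gcongr
    _ = C * K * ((m + (d + 1)).factorial * Real.exp ((1 + ‖x‖) + -ε * ‖x‖ ^ 2)) := by
        rw [Real.exp_add (1 + ‖x‖)]; ring
    _ ≤ _ := by gcongr

/-- integration by parts against a Gaussian weight -/
lemma gauss_ibp {q : E → ℂ} (hq : Continuous q) {K ε : ℝ} (hε : 0 < ε)
    (hb : ∀ x, ‖Complex.exp (q x)‖ ≤ K * Real.exp (-ε * ‖x‖ ^ 2))
    (u : E) (l : E → ℂ) (c : ℂ) (hl : PolyG l)
    (hqu : ∀ x (t : ℝ), q (x + t • u) = q x - t * l x + t ^ 2 * c)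
    {ι : Type*} [DecidableEq ι] (s : Finset ι) (L : ι → E → ℂ) (D : ι → ℂ)
    (hL : ∀ k, PolyG (L k)) (hLu : ∀ k x (t : ℝ), L k (x + t • u) = L k x + t * D k) :
    ∫ x, l x * (∏ k ∈ s, L k x) * Complex.exp (q x) ∂μ =
      ∑ k ∈ s, D k * ∫ x, (∏ k' ∈ s.erase k, L k' x) * Complex.exp (q x) ∂μ := by
  have hw : Continuous fun x => Complex.exp (q x) := by fun_prop
  have hsum : PolyG (fun x => ∑ k ∈ s, (∏ k' ∈ s.erase k, L k' x) * D k) :=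
    PolyG.sum s fun k => (PolyG.prod _ hL).mul (PolyG.const _)
  have key := integral_bilinear_hasLineDerivAt_right_eq_neg_left_of_integrable (μ := μ)
    (f := fun x => ∏ k ∈ s, L k x) (f' := fun x => ∑ k ∈ s, (∏ k' ∈ s.erase k, L k' x) * D k)
    (g := fun x => Complex.exp (q x)) (g' := fun x => - l x * Complex.exp (q x)) (v := u)
    (B := ContinuousLinearMap.mul ℝ ℂ) ?_ ?_ ?_ ?_ ?_
  · simp only [ContinuousLinearMap.mul_apply'] at key
    have e1 : ∀ x, (∏ k ∈ s, L k x) * (-l x * Complex.exp (q x)) =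
        -(l x * (∏ k ∈ s, L k x) * Complex.exp (q x)) := fun x => by ring
    simp only [e1] at key
    rw [integral_neg, neg_inj] at key
    rw [key]
    simp only [Finset.sum_mul]
    rw [integral_finsetSum]
    · refine Finset.sum_congr rfl fun k _ => ?_
      rw [← integral_const_mul]
      congr 1; ext x; ring
    · intro k _
      exact ((PolyG.prod _ hL).mul (PolyG.const _)).integrable hw hε hb
  · exact hsum.integrable hw hε hb
  · have := ((PolyG.prod s hL).mul ((PolyG.const (-1)).mul hl)).integrable (μ := μ) hw hε hb
    refine this.congr (Filter.Eventually.of_forall fun x => ?_)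
    simp only [ContinuousLinearMap.mul_apply']; ring
  · exact (PolyG.prod s hL).integrable hw hε hb
  · intro x _
    have h1 : ∀ k ∈ s, HasDerivAt (fun t : ℝ => L k (x + t • u)) (D k) 0 := by
      intro k _
      simp only [hLu]
      simpa using ((Complex.ofRealCLM.hasDerivAt (x := (0:ℝ))).mul_const (D k)).const_add (L k x)
    have h2 := HasDerivAt.fun_finsetProd h1
    simpa [HasLineDerivAt] using h2
  · intro x _
    have h0 : HasDerivAt (fun t : ℝ => (t : ℂ)) 1 0 := by
      exact (hasDerivAt_id (0 : ℝ)).ofReal_comp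
    have h1 : HasDerivAt (fun t : ℝ => q (x + t • u)) (- l x) 0 := by
      simp only [hqu]
      have := ((h0.mul_const (l x)).const_sub (q x)).fun_add ((h0.fun_pow 2).mul_const c)
      refine this.congr_deriv ?_
      simp
    have h2 := h1.cexp
    unfold HasLineDerivAt
    refine h2.congr_deriv ?_
    simp [mul_comm]

/-- Gaussian integration by parts for linear combinations -/
lemma gauss_wick {q : E → ℂ} (hq : Continuous q) {K ε : ℝ} (hε : 0 < ε)
    (hb : ∀ x, ‖Complex.exp (q x)‖ ≤ K * Real.exp (-ε * ‖x‖ ^ 2))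
    {P : Type*} [Fintype P]
    (u : P → E) (l : P → E → ℂ) (c : P → ℂ) (hl : ∀ p, PolyG (l p))
    (hqu : ∀ p x (t : ℝ), q (x + t • u p) = q x - t * l p x + t ^ 2 * c p)
    {ι : Type*} [DecidableEq ι] (s : Finset ι) (L : ι → E → ℂ) (D : P → ι → ℂ)
    (hL : ∀ k, PolyG (L k)) (hLu : ∀ p k x (t : ℝ), L k (x + t • u p) = L k x + t * D p k)
    (a : P → ℂ) (z : E → ℂ) (hz : ∀ x, z x = ∑ p, a p * l p x) :
    ∫ x, z x * (∏ k ∈ s, L k x) * Complex.exp (q x) ∂μ =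
      ∑ k ∈ s, (∑ p, a p * D p k) * ∫ x, (∏ k' ∈ s.erase k, L k' x) * Complex.exp (q x) ∂μ := by
  have hw : Continuous fun x => Complex.exp (q x) := by fun_prop
  simp only [hz, Finset.sum_mul]
  rw [integral_finsetSum]
  · rw [Finset.sum_comm]
    refine Finset.sum_congr rfl fun p _ => ?_
    have := gauss_ibp (μ := μ) hq hε hb (u p) (l p) (c p) (hl p) (hqu p) s L (D p) hL (hLu p)
    simp only [mul_assoc] at this ⊢
    rw [integral_const_mul, this, Finset.mul_sum]
  · intro p _
    exact (((PolyG.const (a p)).mul (hl p)).mul (PolyG.prod s hL)).integrable hw hε hb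

end general
section compare
variable {R : Type*} [Fintype R] [DecidableEq R]

/-- the Wick recursion characterises antisymmetrised moments -/
lemma wick_compare (m₁ m₂ : Finset R → Equiv.Perm R → ℂ) (C₁ C₂ : R → R → R → R → ℂ)
    (hC : ∀ x y z w, C₁ x y z w = - C₂ x w z y)
    (h₁ : ∀ (S : Finset R) (x : R) (σ : Equiv.Perm R), x ∉ S →
      m₁ (insert x S) σ = ∑ z ∈ S, C₁ x (σ x) z (σ z) * m₁ (S.erase z) σ)
    (h₂ : ∀ (S : Finset R) (x : R) (σ : Equiv.Perm R), x ∉ S →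
      m₂ (insert x S) σ = ∑ z ∈ S, C₂ x (σ x) z (σ z) * m₂ (S.erase z) σ)
    (hinv : ∀ S σ τ, (∀ x ∈ S, σ x = τ x) → m₂ S σ = m₂ S τ)
    (a₁ a₂ : ℂ) (h0₁ : ∀ σ, m₁ ∅ σ = a₁) (h0₂ : ∀ σ, m₂ ∅ σ = a₂)
    (k : ℕ) : ∀ (S : Finset R), S.card = k → ∀ F : Equiv.Perm R → ℂ,
      (∀ x ∈ S, ∀ z ∈ S, x ≠ z → ∀ σ, F (σ * Equiv.swap x z) = - F σ) →
      a₂ * ∑ σ, F σ * m₁ S σ = a₁ * ∑ σ, F σ * m₂ S σ := by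
  induction k using Nat.strong_induction_on with
  | _ k ih =>
  intro S hS F hF
  rcases S.eq_empty_or_nonempty with rfl | ⟨x, hx⟩
  · simp only [h0₁, h0₂, ← Finset.sum_mul]; ring
  · obtain ⟨T, hxT, rfl⟩ : ∃ T, x ∉ T ∧ S = insert x T :=
      ⟨S.erase x, Finset.notMem_erase x S, (Finset.insert_erase hx).symm⟩
    simp only [h₁ T x _ hxT, h₂ T x _ hxT, Finset.mul_sum]
    rw [Finset.sum_comm]
    conv_rhs => rw [Finset.sum_comm]
    refine Finset.sum_congr rfl fun z hz => ?_
    have hxz : x ≠ z := fun h => hxT (h ▸ hz)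
    have hcard : (T.erase z).card < k := by
      rw [← hS, Finset.card_insert_of_notMem hxT, Finset.card_erase_of_mem hz]; omega
    have key := ih _ hcard (T.erase z) rfl (fun σ => F σ * C₁ x (σ x) z (σ z)) ?_
    · have e1 : ∑ σ, a₂ * (F σ * (C₁ x (σ x) z (σ z) * m₁ (T.erase z) σ)) =
          a₂ * ∑ σ, F σ * C₁ x (σ x) z (σ z) * m₁ (T.erase z) σ := by
        rw [Finset.mul_sum]; refine Finset.sum_congr rfl fun σ _ => by ring
      rw [e1, key, Finset.mul_sum]
      rw [← Equiv.sum_comp (Equiv.mulRight (Equiv.swap x z))]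
      refine Finset.sum_congr rfl fun σ _ => ?_
      simp only [Equiv.coe_mulRight, Equiv.Perm.mul_apply, Equiv.swap_apply_left,
        Equiv.swap_apply_right]
      rw [hF x hx z (Finset.mem_insert_of_mem hz) hxz σ, hC,
        hinv (T.erase z) (σ * Equiv.swap x z) σ]
      · ring
      · intro y hy
        have h1 : y ≠ z := Finset.ne_of_mem_erase hy
        have h2 : y ≠ x := fun h => hxT (h ▸ Finset.mem_of_mem_erase hy)
        simp [Equiv.swap_apply_of_ne_of_ne h2 h1]
    · intro y hy y' hy' hne σ
      have h1 : y ≠ z := Finset.ne_of_mem_erase hy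
      have h2 : y ≠ x := fun h => hxT (h ▸ Finset.mem_of_mem_erase hy)
      have h1' : y' ≠ z := Finset.ne_of_mem_erase hy'
      have h2' : y' ≠ x := fun h => hxT (h ▸ Finset.mem_of_mem_erase hy')
      have e1 : (σ * Equiv.swap y y') x = σ x := by
        simp [Equiv.swap_apply_of_ne_of_ne h2.symm h2'.symm]
      have e2 : (σ * Equiv.swap y y') z = σ z := by
        simp [Equiv.swap_apply_of_ne_of_ne h1.symm h1'.symm]
      rw [e1, e2, hF y (Finset.mem_insert_of_mem (Finset.mem_of_mem_erase hy)) y'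
        (Finset.mem_insert_of_mem (Finset.mem_of_mem_erase hy')) hne σ]
      ring

lemma det_expand (A Z : Matrix R R ℂ) : (A + Z).det =
    ∑ S ∈ (Finset.univ : Finset R).powerset, ∑ σ : Equiv.Perm R,
      ((Equiv.Perm.sign σ : ℤ) : ℂ) * (∏ x ∈ Finset.univ \ S, A x (σ x)) * ∏ x ∈ S, Z x (σ x) := by
  rw [← Matrix.det_transpose, Matrix.det_apply', Finset.sum_comm]
  refine Finset.sum_congr rfl fun σ _ => ?_
  simp only [Matrix.transpose_apply, Matrix.add_apply]
  have : ∀ x, A x (σ x) + Z x (σ x) = Z x (σ x) + A x (σ x) := fun x => add_comm _ _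
  simp only [this]
  rw [Finset.prod_add, Finset.mul_sum]
  refine Finset.sum_congr rfl fun S _ => by ring

lemma integrable_det {E : Type*} [MeasurableSpace E] {μ : Measure E} (w : E → ℂ)
    (Z : E → Matrix R R ℂ) (A : Matrix R R ℂ)
    (hInt : ∀ (S : Finset R) (σ : Equiv.Perm R),
      Integrable (fun v => (∏ x ∈ S, Z v x (σ x)) * w v) μ) :
    Integrable (fun v => (A + Z v).det * w v) μ := by
  simp only [det_expand, Finset.sum_mul]
  refine integrable_finsetSum _ fun S _ => integrable_finsetSum _ fun σ _ => ?_
  refine ((hInt S σ).const_mul (((Equiv.Perm.sign σ : ℤ) : ℂ) *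
    (∏ x ∈ Finset.univ \ S, A x (σ x)))).congr (Filter.Eventually.of_forall fun v => ?_)
  simp only []; ring

lemma integral_det {E : Type*} [MeasurableSpace E] {μ : Measure E} (w : E → ℂ)
    (Z : E → Matrix R R ℂ) (A : Matrix R R ℂ)
    (hInt : ∀ (S : Finset R) (σ : Equiv.Perm R),
      Integrable (fun v => (∏ x ∈ S, Z v x (σ x)) * w v) μ) :
    ∫ v, (A + Z v).det * w v ∂μ = ∑ S ∈ (Finset.univ : Finset R).powerset, ∑ σ : Equiv.Perm R,
      ((Equiv.Perm.sign σ : ℤ) : ℂ) * (∏ x ∈ Finset.univ \ S, A x (σ x)) *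
        ∫ v, (∏ x ∈ S, Z v x (σ x)) * w v ∂μ := by
  simp only [det_expand, Finset.sum_mul, mul_assoc]
  have hi : ∀ (S : Finset R) (σ : Equiv.Perm R), Integrable (fun v =>
      ((Equiv.Perm.sign σ : ℤ) : ℂ) * ((∏ x ∈ Finset.univ \ S, A x (σ x)) *
        ((∏ x ∈ S, Z v x (σ x)) * w v))) μ := fun S σ => ((hInt S σ).const_mul _).const_mul _
  rw [integral_finsetSum _ fun S _ => integrable_finsetSum _ fun σ _ => hi S σ]
  refine Finset.sum_congr rfl fun S _ => ?_
  rw [integral_finsetSum _ fun σ _ => hi S σ]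
  refine Finset.sum_congr rfl fun σ _ => ?_
  rw [integral_const_mul, integral_const_mul]

/-- equality of averaged determinants under the two Gaussian weights -/
lemma gauss_det_compare {E₁ E₂ : Type*} [MeasurableSpace E₁] [MeasurableSpace E₂]
    {μ₁ : Measure E₁} {μ₂ : Measure E₂} (w₁ : E₁ → ℂ) (w₂ : E₂ → ℂ)
    (Z₁ : E₁ → Matrix R R ℂ) (Z₂ : E₂ → Matrix R R ℂ) (A : Matrix R R ℂ)
    (C₁ C₂ : R → R → R → R → ℂ) (hC : ∀ x y z w, C₁ x y z w = - C₂ x w z y)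
    (hInt₁ : ∀ (S : Finset R) (σ : Equiv.Perm R),
      Integrable (fun v => (∏ x ∈ S, Z₁ v x (σ x)) * w₁ v) μ₁)
    (hInt₂ : ∀ (S : Finset R) (σ : Equiv.Perm R),
      Integrable (fun v => (∏ x ∈ S, Z₂ v x (σ x)) * w₂ v) μ₂)
    (h₁ : ∀ (S : Finset R) (x : R) (σ : Equiv.Perm R), 
      ∫ v, Z₁ v x (σ x) * (∏ x ∈ S, Z₁ v x (σ x)) * w₁ v ∂μ₁ = ∑ z ∈ S, C₁ x (σ x) z (σ z) *
        ∫ v, (∏ x ∈ S.erase z, Z₁ v x (σ x)) * w₁ v ∂μ₁)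
    (h₂ : ∀ (S : Finset R) (x : R) (σ : Equiv.Perm R), 
      ∫ v, Z₂ v x (σ x) * (∏ x ∈ S, Z₂ v x (σ x)) * w₂ v ∂μ₂ = ∑ z ∈ S, C₂ x (σ x) z (σ z) *
        ∫ v, (∏ x ∈ S.erase z, Z₂ v x (σ x)) * w₂ v ∂μ₂) :
    (∫ v, w₂ v ∂μ₂) * ∫ v, (A + Z₁ v).det * w₁ v ∂μ₁ =
      (∫ v, w₁ v ∂μ₁) * ∫ v, (A + Z₂ v).det * w₂ v ∂μ₂ := by
  rw [integral_det _ _ _ hInt₁, integral_det _ _ _ hInt₂, Finset.mul_sum, Finset.mul_sum]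
  refine Finset.sum_congr rfl fun S _ => ?_
  refine wick_compare (fun S σ => ∫ v, (∏ x ∈ S, Z₁ v x (σ x)) * w₁ v ∂μ₁)
    (fun S σ => ∫ v, (∏ x ∈ S, Z₂ v x (σ x)) * w₂ v ∂μ₂) C₁ C₂ hC ?_ ?_ ?_ _ _ ?_ ?_ _ S rfl _ ?_
  · intro S x σ hx
    simp only [Finset.prod_insert hx, h₁]
  · intro S x σ hx
    simp only [Finset.prod_insert hx, h₂]
  · intro S σ τ h
    refine integral_congr_ae (Filter.Eventually.of_forall fun v => ?_)
    simp only []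
    congr 1
    exact Finset.prod_congr rfl fun x hx => by rw [h x hx]
  · intro σ; simp
  · intro σ; simp
  · intro x hx z hz hne σ
    rw [Equiv.Perm.sign_mul, Equiv.Perm.sign_swap hne]
    have : ∏ y ∈ Finset.univ \ S, A y ((σ * Equiv.swap x z) y) = ∏ y ∈ Finset.univ \ S, A y (σ y) := by
      refine Finset.prod_congr rfl fun y hy => ?_
      have hy' : y ∉ S := (Finset.mem_sdiff.mp hy).2
      have h1 : y ≠ x := fun h => hy' (h ▸ hx)
      have h2 : y ≠ z := fun h => hy' (h ▸ hz)
      simp [Equiv.swap_apply_of_ne_of_ne h1 h2]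
    rw [this]; simp

end compare
section Kmat

lemma negLap_row {A : Type*} [CommRing A] (f : ℝ →+* A) (m : ℕ) (y : ℕ → A) (i : Fin m) :
    ∑ k : Fin m, f (negLap m i k) * y k =
      (if 1 ≤ (i : ℕ) then y i - y (i - 1) else 0) +
        (if (i : ℕ) + 1 < m then y i - y (i + 1) else 0) := by
  have hi := i.2
  obtain ⟨g, hg⟩ : ∃ g : ℕ → A, g = (fun k : ℕ => (if (i : ℕ) = k then
        (2 - (if (i : ℕ) = 0 then 1 else 0) - (if (i : ℕ) = m - 1 then 1 else 0)) * y k else 0)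
      - (if (i : ℕ) + 1 = k then y k else 0)
      - (if k + 1 = (i : ℕ) then y k else 0)) := ⟨_, rfl⟩
  have e : ∀ k : Fin m, f (negLap m i k) * y k = g k := by
    intro k
    rw [hg]
    simp only [negLap, Matrix.of_apply, Fin.ext_iff]
    by_cases h1 : (i : ℕ) = k
    · have h2 : ¬ ((i : ℕ) + 1 = k) := by omega
      have h3 : ¬ ((k : ℕ) + 1 = i) := by omega
      simp only [if_pos h1, if_neg h2, if_neg h3]
      have hf2 : f 2 = 2 := map_ofNat f 2
      split_ifs <;> simp [hf2]
    · by_cases h2 : (i : ℕ) + 1 = k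
      · have h3 : ¬ ((k : ℕ) + 1 = i) := by omega
        simp [h1, h2, h3]
      · by_cases h3 : (k : ℕ) + 1 = i
        · simp [h1, h2, h3]
        · simp [h1, h2, h3]
  rw [Finset.sum_congr rfl fun k _ => e k, ← Finset.sum_range, hg, Finset.sum_sub_distrib,
    Finset.sum_sub_distrib, Finset.sum_ite_eq, Finset.sum_ite_eq]
  have e3 : ∑ k ∈ Finset.range m, (if k + 1 = (i : ℕ) then y k else 0) =
      if 1 ≤ (i : ℕ) then y (i - 1) else 0 := by
    by_cases h : 1 ≤ (i : ℕ)
    · rw [if_pos h, Finset.sum_eq_single ((i : ℕ) - 1)]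
      · rw [if_pos (by omega)]
      · intro b _ hb; rw [if_neg (by omega)]
      · intro hb; simp at hb; omega
    · rw [if_neg h]
      exact Finset.sum_eq_zero fun k _ => by rw [if_neg (by omega)]
  rw [e3]
  simp only [Finset.mem_range, hi, if_true]
  by_cases h1 : 1 ≤ (i : ℕ) <;> by_cases h2 : (i : ℕ) + 1 < m
  · rw [if_neg (by omega : ¬ (i : ℕ) = 0), if_neg (by omega : ¬ (i : ℕ) = m - 1)]
    simp only [h1, h2, if_true]; ring
  · rw [if_neg (by omega : ¬ (i : ℕ) = 0), if_pos (by omega : (i : ℕ) = m - 1)]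
    simp only [h1, h2, if_true, if_false]; ring
  · rw [if_pos (by omega : (i : ℕ) = 0), if_neg (by omega : ¬ (i : ℕ) = m - 1)]
    simp only [h1, h2, if_true, if_false]; ring
  · rw [if_pos (by omega : (i : ℕ) = 0), if_pos (by omega : (i : ℕ) = m - 1)]
    simp only [h1, h2, if_false]; ring

lemma negLap_quad {A : Type*} [CommRing A] (f : ℝ →+* A) (m : ℕ) (y : ℕ → A) :
    ∑ i : Fin m, y i * ∑ k : Fin m, f (negLap m i k) * y k =
      ∑ j ∈ Finset.Ico 1 m, (y j - y (j - 1)) ^ 2 := by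
  simp only [negLap_row]
  rw [← Finset.sum_range (fun i => y i * ((if 1 ≤ i then y i - y (i - 1) else 0) +
        (if i + 1 < m then y i - y (i + 1) else 0)))]
  rcases m with _ | m
  · simp
  rw [Finset.sum_Ico_eq_sum_range]
  simp only [mul_add, Finset.sum_add_distrib]
  rw [Finset.sum_range_succ', Finset.sum_range_succ (fun x => y x * if x + 1 < m + 1 then _ else _)]
  simp only [Nat.add_sub_cancel, add_tsub_cancel_left]
  simp only [le_add_iff_nonneg_left, zero_le, if_true, lt_irrefl, if_false, mul_zero, add_zero,
    nonpos_iff_eq_zero, one_ne_zero]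
  rw [← Finset.sum_add_distrib]
  refine Finset.sum_congr rfl fun k hk => ?_
  rw [if_pos (by simpa using hk)]
  rw [add_comm 1 k]; ring

/-- `K = J⁻¹` -/
noncomputable def Kmat (n : ℕ) (W : ℝ) : Matrix (Fin (2*n+1)) (Fin (2*n+1)) ℝ :=
  W^2 • negLap (2*n+1) + 1

lemma Kmat_row {A : Type*} [CommRing A] (f : ℝ →+* A) (n : ℕ) (W : ℝ) (y : Fin (2*n+1) → A)
    (i : Fin (2*n+1)) :
    ∑ k, f (Kmat n W i k) * y k = f W ^ 2 * ∑ k, f (negLap (2*n+1) i k) * y k + y i := by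
  simp only [Kmat, Matrix.add_apply, Matrix.smul_apply, smul_eq_mul, map_add, map_mul, map_pow,
    add_mul, Finset.sum_add_distrib, Finset.mul_sum]
  congr 1
  · exact Finset.sum_congr rfl fun k _ => by ring
  · rw [Finset.sum_eq_single i]
    · simp
    · intro b _ hb; simp [Matrix.one_apply_ne hb.symm]
    · simp

lemma Kmat_quad {A : Type*} [CommRing A] (f : ℝ →+* A) (n : ℕ) (W : ℝ) (y : ℕ → A) :
    ∑ i : Fin (2*n+1), y i * ∑ k : Fin (2*n+1), f (Kmat n W i k) * y k =
      f W ^ 2 * ∑ j ∈ Finset.Ico 1 (2*n+1), (y j - y (j - 1)) ^ 2 +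
        ∑ j ∈ Finset.range (2*n+1), y j ^ 2 := by
  simp only [Kmat_row f n W (fun k => y k)]
  rw [← negLap_quad f, Finset.mul_sum, Finset.sum_range, ← Finset.sum_add_distrib]
  exact Finset.sum_congr rfl fun k _ => by ring

lemma negLap_symm (m : ℕ) (i j : Fin m) : negLap m i j = negLap m j i := by
  simp only [negLap, Matrix.of_apply]
  by_cases h : i = j
  · subst h; rfl
  · simp only [if_neg h, if_neg (Ne.symm h), or_comm]

lemma Kmat_symm (n : ℕ) (W : ℝ) (i j) : Kmat n W i j = Kmat n W j i := by
  simp only [Kmat, Matrix.add_apply, Matrix.smul_apply, negLap_symm _ i j, Matrix.one_apply, eq_comm]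

lemma extend_exists {A : Type*} [Zero A] (m : ℕ) (y : Fin m → A) :
    ∃ z : ℕ → A, ∀ i : Fin m, z i = y i :=
  ⟨fun j => if h : j < m then y ⟨j, h⟩ else 0, fun i => by simp⟩

lemma Kmat_quad_ge (n : ℕ) (W : ℝ) (y : Fin (2*n+1) → ℝ) :
    ∑ i, y i ^ 2 ≤ ∑ i, y i * ∑ k, Kmat n W i k * y k := by
  obtain ⟨z, hz⟩ := extend_exists _ y
  have := Kmat_quad (RingHom.id ℝ) n W z
  simp only [RingHom.id_apply, hz] at this
  rw [this, Finset.sum_range]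
  simp only [hz]
  have h : 0 ≤ W ^ 2 * ∑ j ∈ Finset.Ico 1 (2 * n + 1), (z j - z (j - 1)) ^ 2 :=
    mul_nonneg (sq_nonneg _) (Finset.sum_nonneg fun _ _ => sq_nonneg _)
  linarith

lemma Kmat_isHermitian (n : ℕ) (W : ℝ) : (Kmat n W).IsHermitian := by
  ext i j; simp [Kmat_symm n W i j]

lemma Kmat_posDef (n : ℕ) (W : ℝ) : (Kmat n W).PosDef := by
  refine Matrix.PosDef.of_dotProduct_mulVec_pos (Kmat_isHermitian n W) fun x hx => ?_
  have h := Kmat_quad_ge n W x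
  have h2 : 0 < ∑ i, x i ^ 2 := by
    obtain ⟨i, hi⟩ := Function.ne_iff.mp hx
    exact Finset.sum_pos' (fun _ _ => sq_nonneg _) ⟨i, Finset.mem_univ _, by
      have : x i ≠ 0 := hi
      positivity⟩
  simpa [dotProduct, Matrix.mulVec] using h2.trans_le h

lemma Kmat_det_pos (n : ℕ) (W : ℝ) : 0 < (Kmat n W).det := (Kmat_posDef n W).det_pos

lemma Kmat_mul_Jmat (n : ℕ) (W : ℝ) : Kmat n W * Jmat n W = 1 :=
  Matrix.mul_nonsing_inv _ (Kmat_det_pos n W).ne'.isUnit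

lemma Jmat_mul_Kmat (n : ℕ) (W : ℝ) : Jmat n W * Kmat n W = 1 :=
  Matrix.nonsing_inv_mul _ (Kmat_det_pos n W).ne'.isUnit

lemma Jmat_symm (n : ℕ) (W : ℝ) (i j) : Jmat n W i j = Jmat n W j i := by
  have h : (Jmat n W).IsHermitian := (Kmat_isHermitian n W).inv
  simpa using (h.apply i j).symm

lemma Jmat_pos (n : ℕ) (W : ℝ) (hW : 0 < W) (a b : Fin (2*n+1)) : 0 < Jmat n W a b := by
  obtain ⟨z, hz⟩ := extend_exists _ (fun i => Jmat n W i b)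
  have hrow : ∀ i : ℕ, i < 2*n+1 → W ^ 2 * ((if 1 ≤ i then z i - z (i - 1) else 0) +
        (if i + 1 < 2*n+1 then z i - z (i + 1) else 0)) + z i = if i = (b : ℕ) then 1 else 0 := by
    intro i hi
    have h1 := negLap_row (RingHom.id ℝ) (2*n+1) z ⟨i, hi⟩
    have h2 := Kmat_row (RingHom.id ℝ) n W (fun k => z k) ⟨i, hi⟩
    rw [h1] at h2
    simp only [RingHom.id_apply, hz] at h2
    have h3 : ∑ k, Kmat n W ⟨i, hi⟩ k * Jmat n W k b = if i = (b : ℕ) then 1 else 0 := by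
      rw [← Matrix.mul_apply, Kmat_mul_Jmat, Matrix.one_apply]
      simp [Fin.ext_iff]
    rw [h3] at h2
    rw [h2]
  have hW2 : 0 < W ^ 2 := by positivity
  have hnn : ∀ i, i < 2*n+1 → 0 ≤ z i := by
    obtain ⟨i, hi, hmin⟩ := Finset.exists_min_image (Finset.range (2*n+1)) z ⟨0, by simp⟩
    simp only [Finset.mem_range] at hi hmin
    have h0 : 0 ≤ z i := by
      have h := hrow i hi
      have h1 : (if 1 ≤ i then z i - z (i - 1) else 0) ≤ 0 := by
        split_ifs
        · linarith [hmin (i - 1) (by omega)]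
        · exact le_rfl
      have h2 : (if i + 1 < 2*n+1 then z i - z (i + 1) else 0) ≤ 0 := by
        split_ifs with hh
        · linarith [hmin (i + 1) hh]
        · exact le_rfl
      have h3 : (0 : ℝ) ≤ if i = (b : ℕ) then 1 else 0 := by split_ifs <;> norm_num
      nlinarith
    exact fun j hj => h0.trans (hmin j hj)
  have hprop : ∀ i, i < 2*n+1 → z i = 0 →
      (1 ≤ i → z (i - 1) = 0) ∧ (i + 1 < 2*n+1 → z (i + 1) = 0) := by
    intro i hi h0
    have h := hrow i hi
    rw [h0] at h
    have h3 : (0 : ℝ) ≤ if i = (b : ℕ) then 1 else 0 := by split_ifs <;> norm_num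
    have h4 : 0 ≤ (if 1 ≤ i then 0 - z (i - 1) else 0) +
        (if i + 1 < 2*n+1 then 0 - z (i + 1) else 0) := by
      by_contra hc
      push Not at hc
      nlinarith
    constructor
    · intro h1
      have ha := hnn (i - 1) (by omega)
      rw [if_pos h1] at h4
      split_ifs at h4 with h2
      · have hb := hnn (i + 1) h2; linarith
      · linarith
    · intro h2
      have hb := hnn (i + 1) h2
      rw [if_pos h2] at h4
      split_ifs at h4 with h1
      · have ha := hnn (i - 1) (by omega); linarith
      · linarith
  rw [← hz a]
  refine lt_of_le_of_ne (hnn a a.2) fun h0 => ?_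
  have hup : ∀ k, (a : ℕ) + k < 2*n+1 → z (a + k) = 0 := by
    intro k
    induction k with
    | zero => intro _; exact h0.symm
    | succ k ih => intro h; exact (hprop (a + k) (by omega) (ih (by omega))).2 h
  have hdn : ∀ k, k ≤ (a : ℕ) → z (a - k) = 0 := by
    intro k
    induction k with
    | zero => intro _; exact h0.symm
    | succ k ih =>
      intro h
      have := (hprop (a - k) (by omega) (ih (by omega))).1 (by omega)
      rwa [Nat.sub_sub] at this
  have hall : ∀ j, j < 2*n+1 → z j = 0 := by
    intro j hj
    rcases le_total (a : ℕ) j with h | h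
    · have := hup (j - a) (by omega)
      rwa [Nat.add_sub_cancel' h] at this
    · have := hdn (a - j) (by omega)
      rwa [Nat.sub_sub_self h] at this
  have h := hrow b b.2
  rw [if_pos rfl, hall b b.2] at h
  split_ifs at h with h1 h2 h2
  · rw [hall (b - 1) (by omega), hall (b + 1) h2] at h; simp at h
  · rw [hall (b - 1) (by omega)] at h; simp at h
  · rw [hall (b + 1) h2] at h; simp at h
  · simp at h

end Kmat
section lhs

/-- index set of the strictly upper triangular entries -/
abbrev UpIdx (n : ℕ) := {q : Fin (2*n+1) × Fin (2*n+1) // q.1 < q.2}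

/-- the space of band matrices -/
abbrev OmL (n : ℕ) := (Fin (2*n+1) → ℝ) × (UpIdx n → ℝ × ℝ)

lemma bandH_lt {n : ℕ} (v : OmL n) {i j : Fin (2*n+1)} (h : i < j) :
    bandH n v.1 v.2 i j = ((v.2 ⟨(i, j), h⟩).1 : ℂ) + ((v.2 ⟨(i, j), h⟩).2 : ℂ) * Complex.I := by
  simp only [bandH, Matrix.of_apply, dif_pos h]
  apply Complex.ext <;> simp

lemma bandH_gt {n : ℕ} (v : OmL n) {i j : Fin (2*n+1)} (h : j < i) :
    bandH n v.1 v.2 i j = ((v.2 ⟨(j, i), h⟩).1 : ℂ) - ((v.2 ⟨(j, i), h⟩).2 : ℂ) * Complex.I := by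
  simp only [bandH, Matrix.of_apply, dif_pos h, dif_neg (not_lt_of_gt h)]
  apply Complex.ext <;> simp

lemma bandH_diag {n : ℕ} (v : OmL n) (i : Fin (2*n+1)) :
    bandH n v.1 v.2 i i = (v.1 i : ℂ) := by
  simp [bandH, Matrix.of_apply]

lemma bandH_add_smul {n : ℕ} (v u : OmL n) (t : ℝ) (i j : Fin (2*n+1)) :
    bandH n (v + t • u).1 (v + t • u).2 i j = bandH n v.1 v.2 i j + t * bandH n u.1 u.2 i j := by
  rcases lt_trichotomy i j with h | h | h
  · rw [bandH_lt _ h, bandH_lt _ h, bandH_lt _ h]; simp; ring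
  · subst h; rw [bandH_diag, bandH_diag, bandH_diag]; simp
  · rw [bandH_gt _ h, bandH_gt _ h, bandH_gt _ h]; simp; ring

lemma polyG_d {n : ℕ} (i : Fin (2*n+1)) : PolyG (fun v : OmL n => (v.1 i : ℂ)) := by
  let f : OmL n →L[ℝ] ℝ := (ContinuousLinearMap.proj (R := ℝ) (φ := fun _ : Fin (2*n+1) => ℝ) i).comp
    (ContinuousLinearMap.fst ℝ (Fin (2*n+1) → ℝ) (UpIdx n → ℝ × ℝ))
  exact PolyG.ofReal f

lemma polyG_o1 {n : ℕ} (q : UpIdx n) : PolyG (fun v : OmL n => ((v.2 q).1 : ℂ)) := by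
  let f : OmL n →L[ℝ] ℝ := (ContinuousLinearMap.fst ℝ ℝ ℝ).comp
    ((ContinuousLinearMap.proj (R := ℝ) (φ := fun _ : UpIdx n => ℝ × ℝ) q).comp
      (ContinuousLinearMap.snd ℝ (Fin (2*n+1) → ℝ) (UpIdx n → ℝ × ℝ)))
  exact PolyG.ofReal f

lemma polyG_o2 {n : ℕ} (q : UpIdx n) : PolyG (fun v : OmL n => ((v.2 q).2 : ℂ)) := by
  let f : OmL n →L[ℝ] ℝ := (ContinuousLinearMap.snd ℝ ℝ ℝ).comp
    ((ContinuousLinearMap.proj (R := ℝ) (φ := fun _ : UpIdx n => ℝ × ℝ) q).comp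
      (ContinuousLinearMap.snd ℝ (Fin (2*n+1) → ℝ) (UpIdx n → ℝ × ℝ)))
  exact PolyG.ofReal f

lemma polyG_bandH {n : ℕ} (i j : Fin (2*n+1)) :
    PolyG (fun v : OmL n => bandH n v.1 v.2 i j) := by
  rcases lt_trichotomy i j with h | h | h
  · simp only [bandH_lt _ h]
    exact (polyG_o1 _).add ((polyG_o2 _).mul (PolyG.const _))
  · subst h; simp only [bandH_diag]; exact polyG_d i
  · simp only [bandH_gt _ h]
    have := (polyG_o1 (n := n) ⟨(j, i), h⟩).add ((polyG_o2 ⟨(j, i), h⟩).mul (PolyG.const (-Complex.I)))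
    simpa [sub_eq_add_neg] using this

/-- the real exponent of the band density -/
noncomputable def qLr (n : ℕ) (W : ℝ) (v : OmL n) : ℝ :=
  -(∑ i, (v.1 i) ^ 2 * (1 / (2 * Jmat n W i i))) -
    ∑ q : UpIdx n, ((v.2 q).1 ^ 2 + (v.2 q).2 ^ 2) * (1 / Jmat n W q.1.1 q.1.2)

/-- the normalisation of the band density -/
noncomputable def cL (n : ℕ) (W : ℝ) : ℝ :=
  (∏ i, (Real.sqrt (2 * Real.pi * Jmat n W i i))⁻¹) *
    ∏ q : UpIdx n, (Real.pi * Jmat n W q.1.1 q.1.2)⁻¹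

lemma bandDens_eq (n : ℕ) (W : ℝ) (v : OmL n) :
    bandDens n W v.1 v.2 = cL n W * Real.exp (qLr n W v) := by
  unfold bandDens cL qLr
  rw [sub_eq_add_neg, Real.exp_add, ← Finset.sum_neg_distrib, ← Finset.sum_neg_distrib,
    Real.exp_sum, Real.exp_sum, Finset.prod_mul_distrib, Finset.prod_mul_distrib]
  have e1 : ∀ i, -(v.1 i) ^ 2 / (2 * Jmat n W i i) = -((v.1 i) ^ 2 * (1 / (2 * Jmat n W i i))) :=
    fun i => by ring
  have e2 : ∀ q : UpIdx n, -((v.2 q).1 ^ 2 + (v.2 q).2 ^ 2) / Jmat n W q.1.1 q.1.2 =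
      -(((v.2 q).1 ^ 2 + (v.2 q).2 ^ 2) * (1 / Jmat n W q.1.1 q.1.2)) := fun q => by ring
  simp only [e1, e2]
  ring

lemma cont_qLr (n : ℕ) (W : ℝ) : Continuous (qLr n W) := by unfold qLr; fun_prop

lemma qLr_bound (n : ℕ) (W : ℝ) (hW : 0 < W) :
    ∃ ε > 0, ∀ v : OmL n, qLr n W v ≤ -ε * ‖v‖ ^ 2 := by
  set B := ∑ i, ∑ j, Jmat n W i j with hB
  have hle : ∀ i j, Jmat n W i j ≤ B := fun i j => by
    have h1 : Jmat n W i j ≤ ∑ j, Jmat n W i j :=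
      Finset.single_le_sum (f := fun j => Jmat n W i j) (fun j _ => (Jmat_pos n W hW i j).le)
        (Finset.mem_univ j)
    exact h1.trans (Finset.single_le_sum (f := fun i => ∑ j, Jmat n W i j)
      (fun i _ => Finset.sum_nonneg fun j _ => (Jmat_pos n W hW i j).le) (Finset.mem_univ i))
  have hBpos : 0 < B := (Jmat_pos n W hW 0 0).trans_le (hle 0 0)
  refine ⟨1 / (2 * B), by positivity, fun v => ?_⟩
  have hT1 : ∀ i, (v.1 i) ^ 2 * (1 / (2 * B)) ≤ (v.1 i) ^ 2 * (1 / (2 * Jmat n W i i)) := by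
    intro i
    have := Jmat_pos n W hW i i
    have := hle i i
    gcongr
  have hT2 : ∀ q : UpIdx n, ((v.2 q).1 ^ 2 + (v.2 q).2 ^ 2) * (1 / (2 * B)) ≤
      ((v.2 q).1 ^ 2 + (v.2 q).2 ^ 2) * (1 / Jmat n W q.1.1 q.1.2) := by
    intro q
    have := Jmat_pos n W hW q.1.1 q.1.2
    have h2 := hle q.1.1 q.1.2
    have h3 : Jmat n W q.1.1 q.1.2 ≤ 2 * B := by linarith
    gcongr
  have hS1 := Finset.sum_le_sum fun i (_ : i ∈ Finset.univ) => hT1 i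
  have hS2 := Finset.sum_le_sum fun i (_ : i ∈ Finset.univ) => hT2 i
  rw [← Finset.sum_mul] at hS1 hS2
  set T1 := ∑ i, (v.1 i) ^ 2
  set T2 := ∑ q : UpIdx n, ((v.2 q).1 ^ 2 + (v.2 q).2 ^ 2)
  have hT10 : 0 ≤ T1 := Finset.sum_nonneg fun _ _ => sq_nonneg _
  have hT20 : 0 ≤ T2 := Finset.sum_nonneg fun _ _ => by positivity
  have hn : ‖v‖ ≤ Real.sqrt (T1 + T2) := by
    rw [Prod.norm_def]
    refine max_le ?_ ?_
    · refine (pi_norm_le_iff_of_nonneg (Real.sqrt_nonneg _)).mpr fun i => ?_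
      refine Real.le_sqrt_of_sq_le ?_
      rw [Real.norm_eq_abs, sq_abs]
      have := Finset.single_le_sum (f := fun i => (v.1 i) ^ 2) (fun j _ => sq_nonneg _)
        (Finset.mem_univ i)
      linarith
    · refine (pi_norm_le_iff_of_nonneg (Real.sqrt_nonneg _)).mpr fun q => ?_
      have := Finset.single_le_sum (f := fun q : UpIdx n => (v.2 q).1 ^ 2 + (v.2 q).2 ^ 2)
        (fun j _ => by positivity) (Finset.mem_univ q)
      rw [Prod.norm_def]
      refine max_le ?_ ?_ <;> refine Real.le_sqrt_of_sq_le ?_ <;> rw [Real.norm_eq_abs, sq_abs]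
      · linarith [sq_nonneg (v.2 q).2]
      · linarith [sq_nonneg (v.2 q).1]
  have hn2 : ‖v‖ ^ 2 ≤ T1 + T2 := by
    have := pow_le_pow_left₀ (norm_nonneg v) hn 2
    rwa [Real.sq_sqrt (by positivity)] at this
  have : 1 / (2 * B) * ‖v‖ ^ 2 ≤ 1 / (2 * B) * (T1 + T2) := by gcongr
  unfold qLr
  linarith

lemma qLr_mass (n : ℕ) (W : ℝ) (hW : 0 < W) :
    ∫ v : OmL n, bandDens n W v.1 v.2 = 1 := by
  unfold bandDens
  have h1 : ∀ b : ℝ, 0 < b → ∫ x : ℝ, (Real.sqrt (2 * Real.pi * b))⁻¹ *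
      Real.exp (-x ^ 2 / (2 * b)) = 1 := by
    intro b hb
    rw [integral_const_mul]
    have e : ∀ x : ℝ, -x ^ 2 / (2 * b) = -(1 / (2 * b)) * x ^ 2 := fun x => by ring
    simp only [e]
    rw [integral_gaussian]
    have : Real.pi / (1 / (2 * b)) = 2 * Real.pi * b := by field_simp
    rw [this]
    exact inv_mul_cancel₀ (by positivity)
  have h2 : ∀ b : ℝ, 0 < b → ∫ x : ℝ × ℝ, (Real.pi * b)⁻¹ *
      Real.exp (-(x.1 ^ 2 + x.2 ^ 2) / b) = 1 := by
    intro b hb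
    rw [integral_const_mul]
    have e : ∀ x : ℝ × ℝ, Real.exp (-(x.1 ^ 2 + x.2 ^ 2) / b) =
        Real.exp (-(1 / b) * x.1 ^ 2) * Real.exp (-(1 / b) * x.2 ^ 2) := fun x => by
      rw [← Real.exp_add]; ring_nf
    simp only [e]
    rw [Measure.volume_eq_prod, integral_prod_mul (fun x : ℝ => Real.exp (-(1 / b) * x ^ 2))
      (fun x : ℝ => Real.exp (-(1 / b) * x ^ 2)), integral_gaussian, Real.mul_self_sqrt (by positivity)]
    field_simp
  rw [Measure.volume_eq_prod, integral_prod_mul (fun d : Fin (2*n+1) → ℝ =>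
      ∏ i, (Real.sqrt (2 * Real.pi * Jmat n W i i))⁻¹ * Real.exp (-(d i)^2 / (2 * Jmat n W i i)))
    (fun o : UpIdx n → ℝ × ℝ => ∏ q : UpIdx n, (Real.pi * Jmat n W q.1.1 q.1.2)⁻¹ *
      Real.exp (-(((o q).1)^2 + ((o q).2)^2) / Jmat n W q.1.1 q.1.2)),
    integral_fintype_prod_volume_eq_prod
      (fun i x => (Real.sqrt (2 * Real.pi * Jmat n W i i))⁻¹ * Real.exp (-x^2 / (2 * Jmat n W i i))),
    integral_fintype_prod_volume_eq_prod
      (fun (q : UpIdx n) (x : ℝ × ℝ) => (Real.pi * Jmat n W q.1.1 q.1.2)⁻¹ *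
        Real.exp (-(x.1^2 + x.2^2) / Jmat n W q.1.1 q.1.2))]
  rw [Finset.prod_congr rfl fun i _ => h1 _ (Jmat_pos n W hW i i),
    Finset.prod_congr rfl fun (q : UpIdx n) _ => h2 _ (Jmat_pos n W hW q.1.1 q.1.2)]
  simp

lemma sum_single_sq {ι : Type*} [Fintype ι] [DecidableEq ι] (b x : ι → ℝ) (i : ι) (t : ℝ) :
    ∑ k, (x k + t * (Pi.single i 1 : ι → ℝ) k) ^ 2 * b k =
      ∑ k, x k ^ 2 * b k + t * (2 * x i * b i) + t ^ 2 * b i := by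
  have : ∀ k, (x k + t * (Pi.single i 1 : ι → ℝ) k) ^ 2 * b k =
      x k ^ 2 * b k + (if k = i then t * (2 * x i * b i) + t ^ 2 * b i else 0) := by
    intro k
    by_cases h : k = i
    · subst h; simp; ring
    · simp [h]
  simp only [this, Finset.sum_add_distrib, Finset.sum_ite_eq', Finset.mem_univ, if_true]
  ring

/-- direction of the diagonal entry -/
noncomputable def dirD (n : ℕ) (i : Fin (2*n+1)) : OmL n := (Pi.single i 1, 0)
/-- direction of the real part of an off-diagonal entry -/
noncomputable def dirR (n : ℕ) (q : UpIdx n) : OmL n := (0, Pi.single q (1, 0))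
/-- direction of the imaginary part of an off-diagonal entry -/
noncomputable def dirI (n : ℕ) (q : UpIdx n) : OmL n := (0, Pi.single q (0, 1))

lemma qLr_dirD (n : ℕ) (W : ℝ) (i) (v : OmL n) (t : ℝ) :
    qLr n W (v + t • dirD n i) = qLr n W v - t * (v.1 i / Jmat n W i i) +
      t ^ 2 * (-(1 / (2 * Jmat n W i i))) := by
  have := sum_single_sq (fun i => 1 / (2 * Jmat n W i i)) v.1 i t
  unfold qLr dirD
  simp only [Prod.fst_add, Prod.snd_add, Prod.smul_fst, Prod.smul_snd, Pi.add_apply, Pi.smul_apply,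
    smul_eq_mul, smul_zero, Pi.zero_apply, Prod.fst_zero, Prod.snd_zero, mul_zero, add_zero]
  rw [this]
  ring

lemma qLr_dirR (n : ℕ) (W : ℝ) (q : UpIdx n) (v : OmL n) (t : ℝ) :
    qLr n W (v + t • dirR n q) = qLr n W v - t * (2 * (v.2 q).1 / Jmat n W q.1.1 q.1.2) +
      t ^ 2 * (-(1 / Jmat n W q.1.1 q.1.2)) := by
  have := sum_single_sq (fun q : UpIdx n => 1 / Jmat n W q.1.1 q.1.2) (fun q => (v.2 q).1) q t
  have e1 : ∀ k, ((Pi.single q ((1 : ℝ), (0 : ℝ)) : UpIdx n → ℝ × ℝ) k).1 =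
      (Pi.single q 1 : UpIdx n → ℝ) k := fun k => by
    by_cases h : k = q
    · subst h; simp
    · simp [h]
  have e2 : ∀ k, ((Pi.single q ((1 : ℝ), (0 : ℝ)) : UpIdx n → ℝ × ℝ) k).2 = 0 := fun k => by
    by_cases h : k = q
    · subst h; simp
    · simp [h]
  unfold qLr dirR
  simp only [Prod.fst_add, Prod.snd_add, Prod.smul_fst, Prod.smul_snd, Pi.add_apply, Pi.smul_apply,
    smul_eq_mul, smul_zero, Pi.zero_apply, Prod.fst_zero, Prod.snd_zero, mul_zero, add_zero, e1, e2, mul_zero, add_mul, Finset.sum_add_distrib]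
  rw [this]
  ring

lemma qLr_dirI (n : ℕ) (W : ℝ) (q : UpIdx n) (v : OmL n) (t : ℝ) :
    qLr n W (v + t • dirI n q) = qLr n W v - t * (2 * (v.2 q).2 / Jmat n W q.1.1 q.1.2) +
      t ^ 2 * (-(1 / Jmat n W q.1.1 q.1.2)) := by
  have := sum_single_sq (fun q : UpIdx n => 1 / Jmat n W q.1.1 q.1.2) (fun q => (v.2 q).2) q t
  have e1 : ∀ k, ((Pi.single q ((0 : ℝ), (1 : ℝ)) : UpIdx n → ℝ × ℝ) k).2 =
      (Pi.single q 1 : UpIdx n → ℝ) k := fun k => by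
    by_cases h : k = q
    · subst h; simp
    · simp [h]
  have e2 : ∀ k, ((Pi.single q ((0 : ℝ), (1 : ℝ)) : UpIdx n → ℝ × ℝ) k).1 = 0 := fun k => by
    by_cases h : k = q
    · subst h; simp
    · simp [h]
  unfold qLr dirI
  simp only [Prod.fst_add, Prod.snd_add, Prod.smul_fst, Prod.smul_snd, Pi.add_apply, Pi.smul_apply,
    smul_eq_mul, smul_zero, Pi.zero_apply, Prod.fst_zero, Prod.snd_zero, mul_zero, add_zero, e1, e2, mul_zero, add_mul, Finset.sum_add_distrib]
  rw [this]
  ring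

lemma bandH_dirD (n : ℕ) (i l m : Fin (2*n+1)) :
    bandH n (dirD n i).1 (dirD n i).2 l m = if l = i ∧ m = i then 1 else 0 := by
  rcases lt_trichotomy l m with h | h | h
  · rw [bandH_lt _ h, if_neg (by rintro ⟨rfl, rfl⟩; exact lt_irrefl _ h)]; simp [dirD]
  · subst h; rw [bandH_diag]
    by_cases h : l = i
    · subst h; simp [dirD]
    · simp [dirD, h]
  · rw [bandH_gt _ h, if_neg (by rintro ⟨rfl, rfl⟩; exact lt_irrefl _ h)]; simp [dirD]

lemma bandH_dirR (n : ℕ) (j k : Fin (2*n+1)) (hjk : j < k) (l m : Fin (2*n+1)) :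
    bandH n (dirR n ⟨(j, k), hjk⟩).1 (dirR n ⟨(j, k), hjk⟩).2 l m =
      (if l = j ∧ m = k then 1 else 0) + (if l = k ∧ m = j then 1 else 0) := by
  rcases lt_trichotomy l m with h | h | h
  · rw [bandH_lt _ h, if_neg (by rintro ⟨rfl, rfl⟩; exact lt_asymm h hjk :  ¬ (l = k ∧ m = j))]
    by_cases h' : l = j ∧ m = k
    · obtain ⟨rfl, rfl⟩ := h'; simp [dirR]
    · rw [if_neg h']; simp only [dirR]; rw [Pi.single_eq_of_ne (by simpa using h')]; simp
  · subst h; rw [bandH_diag, if_neg (by rintro ⟨rfl, rfl⟩; exact lt_irrefl _ hjk),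
      if_neg (by rintro ⟨rfl, rfl⟩; exact lt_irrefl _ hjk)]
    simp [dirR]
  · rw [bandH_gt _ h, if_neg (by rintro ⟨rfl, rfl⟩; exact lt_asymm h hjk :  ¬ (l = j ∧ m = k))]
    by_cases h' : l = k ∧ m = j
    · obtain ⟨rfl, rfl⟩ := h'; simp [dirR]
    · rw [if_neg h']; simp only [dirR]; rw [Pi.single_eq_of_ne (by simpa [and_comm] using h')]; simp

lemma bandH_dirI (n : ℕ) (j k : Fin (2*n+1)) (hjk : j < k) (l m : Fin (2*n+1)) :
    bandH n (dirI n ⟨(j, k), hjk⟩).1 (dirI n ⟨(j, k), hjk⟩).2 l m =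
      (if l = j ∧ m = k then Complex.I else 0) - (if l = k ∧ m = j then Complex.I else 0) := by
  rcases lt_trichotomy l m with h | h | h
  · rw [bandH_lt _ h, if_neg (by rintro ⟨rfl, rfl⟩; exact lt_asymm h hjk :  ¬ (l = k ∧ m = j))]
    by_cases h' : l = j ∧ m = k
    · obtain ⟨rfl, rfl⟩ := h'; simp [dirI]
    · rw [if_neg h']; simp only [dirI]; rw [Pi.single_eq_of_ne (by simpa using h')]; simp
  · subst h; rw [bandH_diag, if_neg (by rintro ⟨rfl, rfl⟩; exact lt_irrefl _ hjk),
      if_neg (by rintro ⟨rfl, rfl⟩; exact lt_irrefl _ hjk)]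
    simp [dirI]
  · rw [bandH_gt _ h, if_neg (by rintro ⟨rfl, rfl⟩; exact lt_asymm h hjk :  ¬ (l = j ∧ m = k))]
    by_cases h' : l = k ∧ m = j
    · obtain ⟨rfl, rfl⟩ := h'; simp [dirI]
    · rw [if_neg h']; simp only [dirI]; rw [Pi.single_eq_of_ne (by simpa [and_comm] using h')]; simp

lemma bandH_dirs (n : ℕ) (W : ℝ) (hW : 0 < W) (j k : Fin (2*n+1)) :
    ∃ (u : Fin 2 → OmL n) (l : Fin 2 → OmL n → ℂ) (c a : Fin 2 → ℂ), (∀ p, PolyG (l p)) ∧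
      (∀ p x (t : ℝ), (qLr n W (x + t • u p) : ℂ) = qLr n W x - t * l p x + t ^ 2 * c p) ∧
      (∀ x : OmL n, bandH n x.1 x.2 j k = ∑ p, a p * l p x) ∧
      ∀ l' m', ∑ p, a p * bandH n (u p).1 (u p).2 l' m' =
        if j = m' ∧ k = l' then (Jmat n W j k : ℂ) else 0 := by
  have hJ : ∀ j k, (Jmat n W j k : ℂ) ≠ 0 := fun j k => by exact_mod_cast (Jmat_pos n W hW j k).ne'
  rcases lt_trichotomy j k with h | h | h
  · refine ⟨![dirR n ⟨(j, k), h⟩, dirI n ⟨(j, k), h⟩],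
      ![fun v => ((v.2 ⟨(j, k), h⟩).1 : ℂ) * (2 / Jmat n W j k),
        fun v => ((v.2 ⟨(j, k), h⟩).2 : ℂ) * (2 / Jmat n W j k)],
      ![-(1 / Jmat n W j k), -(1 / Jmat n W j k)],
      ![(Jmat n W j k) / 2, (Jmat n W j k) / 2 * Complex.I], ?_, ?_, ?_, ?_⟩
    · rw [Fin.forall_fin_two]
      exact ⟨(polyG_o1 _).mul (PolyG.const _), (polyG_o2 _).mul (PolyG.const _)⟩
    · rw [Fin.forall_fin_two]
      refine ⟨fun x t => ?_, fun x t => ?_⟩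
      · simp only [Matrix.cons_val_zero]; rw [qLr_dirR]; push_cast; ring
      · simp only [Matrix.cons_val_one, Matrix.cons_val_fin_one]; rw [qLr_dirI]; push_cast; ring
    · intro x
      rw [bandH_lt _ h]
      simp only [Fin.sum_univ_two, Matrix.cons_val_zero, Matrix.cons_val_one, Matrix.cons_val_fin_one]
      have := hJ j k
      field_simp
    · intro l m
      simp only [Fin.sum_univ_two, Matrix.cons_val_zero, Matrix.cons_val_one, Matrix.cons_val_fin_one]
      rw [bandH_dirR, bandH_dirI]
      by_cases h1 : l = j ∧ m = k
      · obtain ⟨rfl, rfl⟩ := h1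
        simp only [h.ne, h.ne', false_and, and_self, if_true, if_false]
        linear_combination (Jmat n W l m : ℂ) / 2 * Complex.I_mul_I
      · rw [if_neg h1, if_neg h1]
        by_cases h2 : l = k ∧ m = j
        · obtain ⟨rfl, rfl⟩ := h2
          simp only [and_self, if_true]
          linear_combination -(Jmat n W m l : ℂ) / 2 * Complex.I_mul_I
        · rw [if_neg h2, if_neg h2, if_neg (by tauto)]; simp
  · subst h
    refine ⟨![dirD n j, 0], ![fun v => (v.1 j : ℂ) * (1 / Jmat n W j j), fun _ => 0],
      ![-(1 / (2 * Jmat n W j j)), 0], ![Jmat n W j j, 0], ?_, ?_, ?_, ?_⟩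
    · rw [Fin.forall_fin_two]
      exact ⟨(polyG_d _).mul (PolyG.const _), PolyG.const _⟩
    · rw [Fin.forall_fin_two]
      refine ⟨fun x t => ?_, fun x t => ?_⟩
      · simp only [Matrix.cons_val_zero]; rw [qLr_dirD]; push_cast; ring
      · simp
    · intro x
      rw [bandH_diag]
      simp only [Fin.sum_univ_two, Matrix.cons_val_zero, Matrix.cons_val_one, Matrix.cons_val_fin_one]
      have := hJ j j
      field_simp
      simp
    · intro l m
      simp only [Fin.sum_univ_two, Matrix.cons_val_zero, Matrix.cons_val_one, Matrix.cons_val_fin_one]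
      rw [bandH_dirD]
      by_cases h1 : l = j ∧ m = j
      · obtain ⟨rfl, rfl⟩ := h1; simp
      · rw [if_neg h1, if_neg (by rintro ⟨rfl, rfl⟩; simp at h1)]; simp
  · refine ⟨![dirR n ⟨(k, j), h⟩, dirI n ⟨(k, j), h⟩],
      ![fun v => ((v.2 ⟨(k, j), h⟩).1 : ℂ) * (2 / Jmat n W k j),
        fun v => ((v.2 ⟨(k, j), h⟩).2 : ℂ) * (2 / Jmat n W k j)],
      ![-(1 / Jmat n W k j), -(1 / Jmat n W k j)],
      ![(Jmat n W k j) / 2, -(Jmat n W k j) / 2 * Complex.I], ?_, ?_, ?_, ?_⟩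
    · rw [Fin.forall_fin_two]
      exact ⟨(polyG_o1 _).mul (PolyG.const _), (polyG_o2 _).mul (PolyG.const _)⟩
    · rw [Fin.forall_fin_two]
      refine ⟨fun x t => ?_, fun x t => ?_⟩
      · simp only [Matrix.cons_val_zero]; rw [qLr_dirR]; push_cast; ring
      · simp only [Matrix.cons_val_one, Matrix.cons_val_fin_one]; rw [qLr_dirI]; push_cast; ring
    · intro x
      rw [bandH_gt _ h]
      simp only [Fin.sum_univ_two, Matrix.cons_val_zero, Matrix.cons_val_one, Matrix.cons_val_fin_one]
      have := hJ k j
      field_simp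
      ring
    · intro l m
      simp only [Fin.sum_univ_two, Matrix.cons_val_zero, Matrix.cons_val_one, Matrix.cons_val_fin_one]
      rw [bandH_dirR, bandH_dirI, Jmat_symm n W j k]
      by_cases h1 : l = k ∧ m = j
      · obtain ⟨rfl, rfl⟩ := h1
        simp only [h.ne, h.ne', false_and, and_self, if_true, if_false]
        linear_combination -(Jmat n W l m : ℂ) / 2 * Complex.I_mul_I
      · rw [if_neg h1, if_neg h1, if_neg (by tauto : ¬ (j = m ∧ k = l))]
        by_cases h2 : l = j ∧ m = k
        · obtain ⟨rfl, rfl⟩ := h2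
          simp only [and_self, if_true]
          linear_combination (Jmat n W m l : ℂ) / 2 * Complex.I_mul_I
        · rw [if_neg h2, if_neg h2]; simp

/-- the perturbation on the `H` side -/
noncomputable def ZL (n : ℕ) (v : OmL n) : Matrix (Fin (2*n+1) × Fin 2) (Fin (2*n+1) × Fin 2) ℂ :=
  Matrix.of fun x y => if x.2 = y.2 then -bandH n v.1 v.2 x.1 y.1 else 0

/-- covariance on the `H` side -/
noncomputable def CL (n : ℕ) (W : ℝ) (x y z w : Fin (2*n+1) × Fin 2) : ℂ :=
  if x.2 = y.2 ∧ z.2 = w.2 ∧ x.1 = w.1 ∧ y.1 = z.1 then (Jmat n W x.1 y.1 : ℂ) else 0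

lemma polyG_ZL (n : ℕ) (x y) : PolyG (fun v => ZL n v x y) := by
  simp only [ZL, Matrix.of_apply]
  by_cases h : x.2 = y.2
  · simp only [if_pos h]
    simpa using (PolyG.const (-1)).mul (polyG_bandH x.1 y.1)
  · simp only [if_neg h]; exact PolyG.const 0

lemma expL_bound (n : ℕ) (W : ℝ) (hW : 0 < W) : ∃ ε > 0, ∀ v : OmL n,
    ‖Complex.exp (qLr n W v : ℂ)‖ ≤ 1 * Real.exp (-ε * ‖v‖ ^ 2) := by
  obtain ⟨ε, hε, h⟩ := qLr_bound n W hW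
  refine ⟨ε, hε, fun v => ?_⟩
  rw [Complex.norm_exp, Complex.ofReal_re, one_mul]
  exact Real.exp_le_exp.mpr (h v)

instance instHaarRR : (volume : Measure (ℝ × ℝ)).IsAddHaarMeasure := by
  rw [Measure.volume_eq_prod]; infer_instance

instance instHaarOmL (n : ℕ) : (volume : Measure (OmL n)).IsAddHaarMeasure := by
  have h2 : (volume : Measure (UpIdx n → ℝ × ℝ)).IsAddHaarMeasure := by
    rw [volume_pi]
    exact Measure.pi.isAddHaarMeasure _
  exact Measure.prod.instIsAddHaarMeasure _ _

lemma integrable_ZL (n : ℕ) (W : ℝ) (hW : 0 < W) (S : Finset (Fin (2*n+1) × Fin 2))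
    (σ : Equiv.Perm (Fin (2*n+1) × Fin 2)) :
    Integrable (fun v : OmL n => (∏ x ∈ S, ZL n v x (σ x)) * Complex.exp (qLr n W v : ℂ)) := by
  obtain ⟨ε, hε, h⟩ := expL_bound n W hW
  refine (PolyG.prod S fun x => polyG_ZL n x (σ x)).integrable ?_ hε h
  have := cont_qLr n W
  fun_prop

lemma wick_ZL (n : ℕ) (W : ℝ) (hW : 0 < W) (S : Finset (Fin (2*n+1) × Fin 2))
    (x : Fin (2*n+1) × Fin 2) (σ : Equiv.Perm (Fin (2*n+1) × Fin 2)) :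
    ∫ v : OmL n, ZL n v x (σ x) * (∏ x ∈ S, ZL n v x (σ x)) * Complex.exp (qLr n W v : ℂ) =
      ∑ z ∈ S, CL n W x (σ x) z (σ z) *
        ∫ v : OmL n, (∏ x ∈ S.erase z, ZL n v x (σ x)) * Complex.exp (qLr n W v : ℂ) := by
  obtain ⟨ε, hε, h⟩ := expL_bound n W hW
  obtain ⟨u, l, c, a, hl, hq, ha, hC⟩ := bandH_dirs n W hW x.1 (σ x).1
  have hc : Continuous (fun v : OmL n => (qLr n W v : ℂ)) := by
    have := cont_qLr n W
    fun_prop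
  have := gauss_wick (μ := volume) hc hε h u l c hl hq S (fun k v => ZL n v k (σ k))
    (fun p k => ZL n (u p) k (σ k)) (fun k => polyG_ZL n k (σ k)) ?_
    (fun p => if x.2 = (σ x).2 then - a p else 0) (fun v => ZL n v x (σ x)) ?_
  · rw [this]
    refine Finset.sum_congr rfl fun z _ => ?_
    congr 1
    simp only [ZL, Matrix.of_apply, CL]
    by_cases h1 : x.2 = (σ x).2
    · by_cases h2 : z.2 = (σ z).2
      · simp only [h1, h2, if_true, true_and]
        rw [← hC]
        exact Finset.sum_congr rfl fun p _ => by ring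
      · simp [h2]
    · simp [h1]
  · intro p k v t
    simp only [ZL, Matrix.of_apply]
    split_ifs
    · rw [bandH_add_smul]; ring
    · simp
  · intro v
    simp only [ZL, Matrix.of_apply]
    split_ifs
    · rw [ha, ← Finset.sum_neg_distrib]
      exact Finset.sum_congr rfl fun p _ => by ring
    · simp

end lhs
section rhs

/-- multiplicities of the four real coordinates in `Tr Y²` -/
noncomputable def mv : Fin 4 → ℝ := ![1, 1, 2, 2]

/-- the exponent on the `X` side, with shift `d` -/
noncomputable def qR (n : ℕ) (W : ℝ) (d : Fin 4 → ℝ) (t : Fin (2*n+1) → Fin 4 → ℝ) : ℂ :=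
  -(1/2) * ∑ c, (mv c : ℂ) * ∑ j, ((t j c : ℂ) + d c * Complex.I) *
    ∑ k, (Kmat n W j k : ℂ) * ((t k c : ℂ) + d c * Complex.I)

lemma Kmat_spectral (n : ℕ) (W : ℝ) : ∃ (U : Matrix (Fin (2*n+1)) (Fin (2*n+1)) ℝ)
    (κ : Fin (2*n+1) → ℝ), (∀ i, 0 < κ i) ∧ U * U.transpose = 1 ∧
      U.transpose * Kmat n W * U = Matrix.diagonal κ ∧ ∏ i, κ i = (Kmat n W).det := by
  have hP := Kmat_posDef n W
  have h := (Kmat_isHermitian n W)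
  refine ⟨h.eigenvectorUnitary, h.eigenvalues, fun i => hP.eigenvalues_pos i, ?_, ?_, ?_⟩
  · exact Unitary.mul_star_self_of_mem h.eigenvectorUnitary.2
  · have := h.conjStarAlgAut_star_eigenvectorUnitary
    rw [Unitary.conjStarAlgAut_apply] at this
    simpa [Matrix.star_eq_conjTranspose] using this
  · rw [h.det_eq_prod_eigenvalues]; rfl

lemma quad_diag {m : ℕ} (K U : Matrix (Fin m) (Fin m) ℝ) (κ : Fin m → ℝ)
    (h : U.transpose * K * U = Matrix.diagonal κ) (z : Fin m → ℂ) :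
    ∑ j, (∑ l, (U j l : ℂ) * z l) * ∑ k, (K j k : ℂ) * (∑ l, (U k l : ℂ) * z l) =
      ∑ l, (κ l : ℂ) * z l ^ 2 := by
  let Kc := K.map Complex.ofReal
  let Uc := U.map Complex.ofReal
  have hc : Uc.transpose * Kc * Uc = Matrix.diagonal (fun i => (κ i : ℂ)) := by
    have := congrArg (fun M => M.map (Complex.ofRealHom)) h
    simp only [Matrix.map_mul] at this
    rw [Matrix.diagonal_map (by simp)] at this
    exact this
  have e : ∑ j, (∑ l, (U j l : ℂ) * z l) * ∑ k, (K j k : ℂ) * (∑ l, (U k l : ℂ) * z l) =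
      (Uc.mulVec z) ⬝ᵥ (Kc.mulVec (Uc.mulVec z)) := rfl
  rw [e, Matrix.dotProduct_mulVec, Matrix.vecMul_mulVec, Matrix.dotProduct_mulVec,
    Matrix.vecMul_vecMul, hc]
  simp only [dotProduct, Matrix.vecMul_diagonal]
  exact Finset.sum_congr rfl fun i _ => by ring

lemma det_act {m : ℕ} (U : Matrix (Fin m) (Fin m) ℝ) (hU : U * U.transpose = 1) :
    ∃ T : (Fin m → Fin 4 → ℝ) →ₗ[ℝ] (Fin m → Fin 4 → ℝ), LinearMap.det T = 1 ∧
      ∀ s j c, T s j c = ∑ k, U j k * s k c := by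
  let e := LinearEquiv.curry ℝ ℝ (Fin m) (Fin 4)
  let M := Matrix.kroneckerMap (fun x1 x2 => x1 * x2) U (1 : Matrix (Fin 4) (Fin 4) ℝ)
  refine ⟨e ∘ₗ Matrix.toLin' M ∘ₗ e.symm, ?_, ?_⟩
  · rw [LinearMap.det_conj, LinearMap.det_toLin', Matrix.det_kronecker]
    have : U.det * U.det = 1 := by
      have := congrArg Matrix.det hU
      rwa [Matrix.det_mul, Matrix.det_transpose, Matrix.det_one] at this
    simp only [Fintype.card_fin, Matrix.det_one, one_pow, mul_one]
    linear_combination (U.det ^ 2 + 1) * this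
  · intro s j c
    simp [e, M, Matrix.mulVec, dotProduct, Fintype.sum_prod_type, Matrix.one_apply, LinearEquiv.curry,
      Function.uncurry, Function.curry]

lemma csqrt_mul_self (x : ℂ) (hx : x ≠ 0) : x ^ (1/2 : ℂ) * x ^ (1/2 : ℂ) = x := by
  rw [← Complex.cpow_add _ _ hx]; norm_num

lemma qR_mass (n : ℕ) (W : ℝ) (d : Fin 4 → ℝ) :
    ∫ t, Complex.exp (qR n W d t) =
      (((2 * Real.pi ^ 2) ^ (2*n+1) * ((Kmat n W).det ^ 2)⁻¹ : ℝ) : ℂ) := by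
  obtain ⟨U, κ, hκ, hU, hUK, hdet⟩ := Kmat_spectral n W
  obtain ⟨T, hT, hTs⟩ := det_act U hU
  have hU2 : ∀ j, ∑ k, U j k * (∑ i, U i k) = 1 := by
    intro j
    have : ∀ i, ∑ k, U j k * U i k = (1 : Matrix _ _ ℝ) j i := fun i => by
      rw [← hU]; rfl
    simp only [Finset.mul_sum]
    rw [Finset.sum_comm]
    simp [this, Matrix.one_apply]
  have hmap := Measure.map_linearMap_addHaar_eq_smul_addHaar
    (volume : Measure (Fin (2*n+1) → Fin 4 → ℝ)) (f := T) (by rw [hT]; exact one_ne_zero)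
  rw [hT] at hmap
  simp only [inv_one, abs_one, ENNReal.ofReal_one, one_smul] at hmap
  have hcont : Continuous (qR n W d) := by unfold qR; fun_prop
  have hTc : Continuous T := LinearMap.continuous_of_finiteDimensional T
  have step1 : ∫ t, Complex.exp (qR n W d t) = ∫ s, Complex.exp (qR n W d (T s)) := by
    conv_lhs => rw [← hmap]
    rw [integral_map hTc.measurable.aemeasurable]
    exact (by fun_prop : Continuous fun t => Complex.exp (qR n W d t)).aestronglyMeasurable
  have step2 : ∀ s, Complex.exp (qR n W d (T s)) = ∏ k, ∏ c, Complex.exp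
      (-((mv c * κ k / 2 : ℝ) : ℂ) * ((s k c : ℂ) + ((d c * ∑ i, U i k : ℝ) : ℂ) * Complex.I) ^ 2) := by
    intro s
    simp only [← Complex.exp_sum]
    congr 1
    unfold qR
    have hy : ∀ j c, ((T s j c : ℝ) : ℂ) + d c * Complex.I =
        ∑ k, (U j k : ℂ) * ((s k c : ℂ) + ((d c * ∑ i, U i k : ℝ) : ℂ) * Complex.I) := by
      intro j c
      have h2 : ((∑ k, U j k * (∑ i, U i k) : ℝ) : ℂ) = 1 := by rw [hU2]; simp
      rw [hTs]
      simp only [mul_add, Finset.sum_add_distrib]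
      push_cast
      push_cast at h2
      congr 1
      calc (d c : ℂ) * Complex.I = d c * Complex.I * ∑ k, (U j k : ℂ) * (∑ i, (U i k : ℂ)) := by
            rw [h2, mul_one]
        _ = _ := by
            rw [Finset.mul_sum]
            exact Finset.sum_congr rfl fun k _ => by ring
    simp only [hy]
    simp only [quad_diag _ U κ hUK]
    rw [Finset.sum_comm, Finset.mul_sum]
    refine Finset.sum_congr rfl fun c _ => ?_
    rw [Finset.mul_sum, Finset.mul_sum]
    refine Finset.sum_congr rfl fun k _ => ?_
    push_cast
    ring
  have step3 : ∀ k c, ∫ x : ℝ, Complex.exp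
      (-((mv c * κ k / 2 : ℝ) : ℂ) * ((x : ℂ) + ((d c * ∑ i, U i k : ℝ) : ℂ) * Complex.I) ^ 2) =
      ((Real.pi / (mv c * κ k / 2) : ℝ) : ℂ) ^ (1/2 : ℂ) := by
    intro k c
    rw [GaussianFourier.integral_cexp_neg_mul_sq_add_real_mul_I]
    · push_cast; rfl
    · rw [Complex.ofReal_re]
      have : 0 < mv c := by fin_cases c <;> simp [mv]
      have := hκ k
      positivity
  rw [step1]
  simp only [step2]
  rw [integral_fintype_prod_volume_eq_prod (fun (k : Fin (2*n+1)) (x : Fin 4 → ℝ) => ∏ c, Complex.exp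
      (-((mv c * κ k / 2 : ℝ) : ℂ) * ((x c : ℂ) + ((d c * ∑ i, U i k : ℝ) : ℂ) * Complex.I) ^ 2))]
  have step4 : ∀ k, ∫ x : Fin 4 → ℝ, ∏ c, Complex.exp
      (-((mv c * κ k / 2 : ℝ) : ℂ) * ((x c : ℂ) + ((d c * ∑ i, U i k : ℝ) : ℂ) * Complex.I) ^ 2) =
      ((2 * Real.pi ^ 2 * ((κ k) ^ 2)⁻¹ : ℝ) : ℂ) := by
    intro k
    rw [integral_fintype_prod_volume_eq_prod (fun (c : Fin 4) (x : ℝ) => Complex.exp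
      (-((mv c * κ k / 2 : ℝ) : ℂ) * ((x : ℂ) + ((d c * ∑ i, U i k : ℝ) : ℂ) * Complex.I) ^ 2))]
    simp only [step3, Fin.prod_univ_four]
    have m0 : mv 0 = 1 := rfl
    have m1 : mv 1 = 1 := rfl
    have m2 : mv 2 = 2 := rfl
    have m3 : mv 3 = 2 := rfl
    have hk := hκ k
    rw [m0, m1, m2, m3, csqrt_mul_self, mul_assoc, csqrt_mul_self, ← Complex.ofReal_mul]
    · congr 1
      field_simp
    · have : 0 < Real.pi / (2 * κ k / 2) := by positivity
      exact_mod_cast this.ne'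
    · have : 0 < Real.pi / (1 * κ k / 2) := by positivity
      exact_mod_cast this.ne'
  simp only [step4]
  rw [← Complex.ofReal_prod, Finset.prod_mul_distrib, Finset.prod_inv_distrib, Finset.prod_pow, hdet]
  simp

end rhs
section rhs2

/-- coefficients of the entries of a 2×2 Hermitian matrix in its real coordinates -/
noncomputable def sv : Fin 2 → Fin 2 → Fin 4 → ℂ :=
  ![![![1, 0, 0, 0], ![0, 0, 1, Complex.I]], ![![0, 0, 1, -Complex.I], ![0, 1, 0, 0]]]

lemma sv_cov (a b a' b' : Fin 2) : ∑ c, sv a b c * sv a' b' c / (mv c : ℂ) =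
    if a = b' ∧ b = a' then 1 else 0 := by
  fin_cases a <;> fin_cases b <;> fin_cases a' <;> fin_cases b' <;>
    simp [sv, mv, Fin.sum_univ_four, Complex.I_mul_I] <;> norm_num

lemma mv_ge (c : Fin 4) : 1 ≤ mv c := by fin_cases c <;> simp [mv]

/-- the perturbation on the `X` side -/
noncomputable def ZR (n : ℕ) (d : Fin 4 → ℝ) (t : Fin (2*n+1) → Fin 4 → ℝ) :
    Matrix (Fin (2*n+1) × Fin 2) (Fin (2*n+1) × Fin 2) ℂ :=
  Matrix.of fun x y => if x.1 = y.1 then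
    Complex.I * ∑ c, sv x.2 y.2 c * ((t x.1 c : ℂ) + d c * Complex.I) else 0

/-- covariance on the `X` side -/
noncomputable def CR (n : ℕ) (W : ℝ) (x y z w : Fin (2*n+1) × Fin 2) : ℂ :=
  if x.1 = y.1 ∧ z.1 = w.1 ∧ x.2 = w.2 ∧ y.2 = z.2 then -(Jmat n W x.1 z.1 : ℂ) else 0

lemma CL_eq_CR (n : ℕ) (W : ℝ) (x y z w) : CL n W x y z w = - CR n W x w z y := by
  unfold CL CR
  by_cases h : x.2 = y.2 ∧ z.2 = w.2 ∧ x.1 = w.1 ∧ y.1 = z.1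
  · rw [if_pos h, if_pos ⟨h.2.2.1, h.2.2.2.symm, h.1, h.2.1.symm⟩, h.2.2.2, neg_neg]
  · rw [if_neg h, if_neg (fun h' => h ⟨h'.2.2.1, h'.2.2.2.symm, h'.1, h'.2.1.symm⟩), neg_zero]

lemma polyG_t {n : ℕ} (j : Fin (2*n+1)) (c : Fin 4) :
    PolyG (fun t : Fin (2*n+1) → Fin 4 → ℝ => (t j c : ℂ)) := by
  let f : (Fin (2*n+1) → Fin 4 → ℝ) →L[ℝ] ℝ :=
    (ContinuousLinearMap.proj (R := ℝ) (φ := fun _ : Fin 4 => ℝ) c).comp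
      (ContinuousLinearMap.proj (R := ℝ) (φ := fun _ : Fin (2*n+1) => Fin 4 → ℝ) j)
  exact PolyG.ofReal f

lemma polyG_ZR (n : ℕ) (d : Fin 4 → ℝ) (x y) : PolyG (fun t => ZR n d t x y) := by
  simp only [ZR, Matrix.of_apply]
  by_cases h : x.1 = y.1
  · simp only [if_pos h]
    exact (PolyG.const _).mul (PolyG.sum _ fun c =>
      (PolyG.const _).mul ((polyG_t _ _).add (PolyG.const _)))
  · simp only [if_neg h]; exact PolyG.const 0

lemma cont_qR (n : ℕ) (W : ℝ) (d : Fin 4 → ℝ) : Continuous (qR n W d) := by unfold qR; fun_prop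

lemma expR_bound (n : ℕ) (W : ℝ) (d : Fin 4 → ℝ) : ∃ B : ℝ, ∀ t : Fin (2*n+1) → Fin 4 → ℝ,
    ‖Complex.exp (qR n W d t)‖ ≤ B * Real.exp (-(1/2) * ‖t‖ ^ 2) := by
  let S := ∑ c, mv c * ∑ j, d c * ∑ k, Kmat n W j k * d c
  refine ⟨Real.exp (S / 2), fun t => ?_⟩
  rw [Complex.norm_exp, ← Real.exp_add]
  refine Real.exp_le_exp.mpr ?_
  have h1 : (qR n W d t).re = -(1/2) * ∑ c, mv c * ((∑ j, t j c * ∑ k, Kmat n W j k * t k c) -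
      ∑ j, d c * ∑ k, Kmat n W j k * d c) := by
    have e : (-(1/2) : ℂ) = ((-(1/2) : ℝ) : ℂ) := by push_cast; rfl
    unfold qR
    rw [e, Complex.re_ofReal_mul, Complex.re_sum]
    congr 1
    refine Finset.sum_congr rfl fun c _ => ?_
    rw [Complex.re_ofReal_mul, Complex.re_sum, ← Finset.sum_sub_distrib]
    congr 1
    refine Finset.sum_congr rfl fun j _ => ?_
    rw [Complex.mul_re, Complex.re_sum, Complex.im_sum]
    simp
  have h2 : ∑ c, ∑ j, (t j c) ^ 2 ≤ ∑ c, mv c * (∑ j, t j c * ∑ k, Kmat n W j k * t k c) := by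
    refine Finset.sum_le_sum fun c _ => ?_
    have := Kmat_quad_ge n W (fun j => t j c)
    have h0 : 0 ≤ ∑ j, (t j c) ^ 2 := Finset.sum_nonneg fun _ _ => sq_nonneg _
    nlinarith [mv_ge c]
  have h3 : ‖t‖ ^ 2 ≤ ∑ c, ∑ j, (t j c) ^ 2 := by
    have h0 : 0 ≤ ∑ c, ∑ j, (t j c) ^ 2 :=
      Finset.sum_nonneg fun _ _ => Finset.sum_nonneg fun _ _ => sq_nonneg _
    have hn : ‖t‖ ≤ Real.sqrt (∑ c, ∑ j, (t j c) ^ 2) := by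
      refine (pi_norm_le_iff_of_nonneg (Real.sqrt_nonneg _)).mpr fun j => ?_
      refine (pi_norm_le_iff_of_nonneg (Real.sqrt_nonneg _)).mpr fun c => ?_
      refine Real.le_sqrt_of_sq_le ?_
      rw [Real.norm_eq_abs, sq_abs]
      have k1 := Finset.single_le_sum (f := fun j => (t j c) ^ 2) (fun j _ => sq_nonneg _)
        (Finset.mem_univ j)
      have k2 := Finset.single_le_sum (f := fun c => ∑ j, (t j c) ^ 2)
        (fun c _ => Finset.sum_nonneg fun _ _ => sq_nonneg _) (Finset.mem_univ c)
      exact k1.trans k2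
    have := pow_le_pow_left₀ (norm_nonneg t) hn 2
    rwa [Real.sq_sqrt h0] at this
  rw [h1]
  simp only [mul_sub, Finset.sum_sub_distrib]
  change _ - -(1/2) * S ≤ _
  linarith

lemma quad_shift {m : ℕ} (K : Matrix (Fin m) (Fin m) ℝ) (hK : ∀ i j, K i j = K j i)
    (y : Fin m → ℂ) (k : Fin m) (s : ℂ) :
    ∑ j, (y j + (if j = k then s else 0)) * ∑ l, (K j l : ℂ) * (y l + (if l = k then s else 0)) =
      (∑ j, y j * ∑ l, (K j l : ℂ) * y l) + 2 * s * ∑ j, (K k j : ℂ) * y j + s ^ 2 * K k k := by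
  have h : ∀ j, ∑ l, (K j l : ℂ) * (y l + (if l = k then s else 0)) =
      (∑ l, (K j l : ℂ) * y l) + K k j * s := fun j => by
    simp only [mul_add, Finset.sum_add_distrib, mul_ite, mul_zero, Finset.sum_ite_eq',
      Finset.mem_univ, if_true, hK j k]
  simp only [h]
  simp only [add_mul, mul_add, Finset.sum_add_distrib, ite_mul, zero_mul, Finset.sum_ite_eq',
      Finset.mem_univ, if_true]
  have h2 : ∑ j, y j * (K k j * s) = s * ∑ j, (K k j : ℂ) * y j := by
    rw [Finset.mul_sum]; exact Finset.sum_congr rfl fun j _ => by ring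
  rw [h2]
  ring

/-- coordinate directions -/
noncomputable def eR (n : ℕ) (k : Fin (2*n+1)) (c : Fin 4) : Fin (2*n+1) → Fin 4 → ℝ :=
  fun j c' => if j = k ∧ c' = c then 1 else 0

lemma add_eR (n : ℕ) (k : Fin (2*n+1)) (c : Fin 4) (t : Fin (2*n+1) → Fin 4 → ℝ) (s : ℝ) (j c') :
    (t + s • eR n k c) j c' = t j c' + if j = k ∧ c' = c then s else 0 := by
  simp [eR]

lemma qR_dir (n : ℕ) (W : ℝ) (d : Fin 4 → ℝ) (k : Fin (2*n+1)) (c : Fin 4)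
    (t : Fin (2*n+1) → Fin 4 → ℝ) (s : ℝ) :
    qR n W d (t + s • eR n k c) = qR n W d t -
      s * (mv c * ∑ j, (Kmat n W k j : ℂ) * ((t j c : ℂ) + d c * Complex.I)) +
      s ^ 2 * (-(1/2) * mv c * Kmat n W k k) := by
  unfold qR
  have h : ∀ c', ∑ j, (((t + s • eR n k c) j c' : ℝ) + d c' * Complex.I) *
      ∑ l, (Kmat n W j l : ℂ) *
        (((t + s • eR n k c) l c' : ℝ) + d c' * Complex.I) =
      (∑ j, ((t j c' : ℂ) + d c' * Complex.I) *
        ∑ l, (Kmat n W j l : ℂ) * ((t l c' : ℂ) + d c' * Complex.I)) +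
      if c' = c then 2 * s * ∑ j, (Kmat n W k j : ℂ) * ((t j c : ℂ) + d c * Complex.I) +
        s ^ 2 * Kmat n W k k else 0 := by
    intro c'
    by_cases hc : c' = c
    · subst hc
      have e : ∀ j, (((t + s • eR n k c') j c' : ℝ) : ℂ) + d c' * Complex.I =
          ((t j c' : ℂ) + d c' * Complex.I) + (if j = k then (s : ℂ) else 0) := by
        intro j
        by_cases hj : j = k
        · subst hj; simp [add_eR]; ring
        · simp [add_eR, hj]
      simp only [e, if_true]
      rw [quad_shift _ (Kmat_symm n W)]
      ring
    · have e : ∀ j, (t + s • eR n k c) j c' = t j c' := by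
        intro j
        by_cases hj : j = k
        · subst hj; simp [add_eR, hc]
        · simp [add_eR, hj]
      simp only [e, if_neg hc, add_zero]
  simp only [h]
  have key : ∀ (G : Fin 4 → ℂ) (Y : ℂ), -(1/2) * ∑ c', (mv c' : ℂ) * (G c' + if c' = c then Y else 0) =
      -(1/2) * ∑ c', (mv c' : ℂ) * G c' - (1/2) * mv c * Y := by
    intro G Y
    simp only [mul_add, Finset.sum_add_distrib, mul_ite, mul_zero, Finset.sum_ite_eq',
      Finset.mem_univ, if_true]
    ring
  rw [key]
  ring

lemma integrable_ZR (n : ℕ) (W : ℝ) (d : Fin 4 → ℝ) (S : Finset (Fin (2*n+1) × Fin 2))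
    (σ : Equiv.Perm (Fin (2*n+1) × Fin 2)) :
    Integrable (fun t => (∏ x ∈ S, ZR n d t x (σ x)) * Complex.exp (qR n W d t)) := by
  obtain ⟨B, h⟩ := expR_bound n W d
  refine (PolyG.prod S fun x => polyG_ZR n d x (σ x)).integrable ?_ (by norm_num) h
  have := cont_qR n W d
  fun_prop

lemma JK_sum (n : ℕ) (W : ℝ) (i : Fin (2*n+1)) (y : Fin (2*n+1) → ℂ) :
    ∑ k, (Jmat n W i k : ℂ) * ∑ j, (Kmat n W k j : ℂ) * y j = y i := by
  have h : ∀ j, ∑ k, (Jmat n W i k : ℂ) * (Kmat n W k j : ℂ) = if i = j then 1 else 0 := by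
    intro j
    have := congrFun (congrFun (Jmat_mul_Kmat n W) i) j
    rw [Matrix.mul_apply, Matrix.one_apply] at this
    have := congrArg (fun x : ℝ => (x : ℂ)) this
    push_cast at this
    rw [this]
    split_ifs <;> simp
  simp only [Finset.mul_sum, ← mul_assoc]
  rw [Finset.sum_comm]
  simp only [← Finset.sum_mul, h]
  simp

lemma wick_ZR (n : ℕ) (W : ℝ) (d : Fin 4 → ℝ) (S : Finset (Fin (2*n+1) × Fin 2))
    (x : Fin (2*n+1) × Fin 2) (σ : Equiv.Perm (Fin (2*n+1) × Fin 2)) :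
    ∫ t, ZR n d t x (σ x) * (∏ x ∈ S, ZR n d t x (σ x)) * Complex.exp (qR n W d t) =
      ∑ z ∈ S, CR n W x (σ x) z (σ z) *
        ∫ t, (∏ x ∈ S.erase z, ZR n d t x (σ x)) * Complex.exp (qR n W d t) := by
  obtain ⟨B, h⟩ := expR_bound n W d
  have hm : ∀ c, (mv c : ℂ) ≠ 0 := fun c => by
    have := mv_ge c
    exact_mod_cast (by linarith : (0 : ℝ) < mv c).ne'
  have := gauss_wick (μ := volume) (cont_qR n W d) (by norm_num) h
    (P := Fin (2*n+1) × Fin 4)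
    (fun p => eR n p.1 p.2)
    (fun p t => mv p.2 * ∑ j, (Kmat n W p.1 j : ℂ) * ((t j p.2 : ℂ) + d p.2 * Complex.I))
    (fun p => -(1/2) * mv p.2 * Kmat n W p.1 p.1)
    (fun p => (PolyG.const _).mul (PolyG.sum _ fun j =>
      (PolyG.const _).mul ((polyG_t _ _).add (PolyG.const _))))
    (fun p t s => qR_dir n W d p.1 p.2 t s)
    S (fun k t => ZR n d t k (σ k))
    (fun p z => if z.1 = (σ z).1 then Complex.I * (sv z.2 (σ z).2 p.2 * if z.1 = p.1 then 1 else 0)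
      else 0)
    (fun k => polyG_ZR n d k (σ k)) ?_
    (fun p => if x.1 = (σ x).1 then
      Complex.I * (sv x.2 (σ x).2 p.2 * (Jmat n W x.1 p.1 / mv p.2)) else 0)
    (fun t => ZR n d t x (σ x)) ?_
  · rw [this]
    refine Finset.sum_congr rfl fun z _ => ?_
    congr 1
    simp only [CR]
    by_cases h1 : x.1 = (σ x).1
    · by_cases h2 : z.1 = (σ z).1
      · simp only [if_pos h1, if_pos h2, Fintype.sum_prod_type]
        rw [Finset.sum_comm]
        have e : ∀ c, ∑ k, Complex.I * (sv x.2 (σ x).2 c * ((Jmat n W x.1 k : ℂ) / mv c)) *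
            (Complex.I * (sv z.2 (σ z).2 c * if z.1 = k then 1 else 0)) =
            -(Jmat n W x.1 z.1 : ℂ) * (sv x.2 (σ x).2 c * sv z.2 (σ z).2 c / mv c) := by
          intro c
          simp only [mul_ite, mul_one, mul_zero, Finset.sum_ite_eq, Finset.mem_univ, if_true]
          linear_combination (sv x.2 (σ x).2 c * sv z.2 (σ z).2 c * (Jmat n W x.1 z.1 : ℂ) / mv c) *
            Complex.I_mul_I
        simp only [e, ← Finset.mul_sum, sv_cov]
        by_cases h3 : x.2 = (σ z).2 ∧ (σ x).2 = z.2
        · rw [if_pos h3, if_pos ⟨h1, h2, h3.1, h3.2⟩, mul_one]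
        · rw [if_neg h3, if_neg (fun h' => h3 ⟨h'.2.2.1, h'.2.2.2⟩), mul_zero]
      · simp [h2]
    · simp [h1]
  · intro p z t s
    simp only [ZR, Matrix.of_apply]
    split_ifs with h1 h2
    · have e : ∀ c, (((t + s • eR n p.1 p.2) z.1 c : ℝ) : ℂ) =
          t z.1 c + (if c = p.2 then (s : ℂ) else 0) := by
        intro c
        by_cases hc : c = p.2
        · subst hc; simp [add_eR, h2]
        · simp [add_eR, h2, hc]
      simp only [e, mul_add, add_mul, Finset.sum_add_distrib, mul_ite, mul_zero, Finset.sum_ite_eq',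
        Finset.mem_univ, if_true]
      ring
    · have e : ∀ c, (t + s • eR n p.1 p.2) z.1 c = t z.1 c := by
        intro c; simp [add_eR, h2]
      simp only [e]; ring
    · simp
  · intro t
    simp only [ZR, Matrix.of_apply]
    split_ifs
    · rw [Fintype.sum_prod_type, Finset.sum_comm, Finset.mul_sum]
      refine Finset.sum_congr rfl fun c _ => ?_
      rw [← JK_sum n W x.1 (fun j => (t j c : ℂ) + d c * Complex.I), Finset.mul_sum, Finset.mul_sum]
      refine Finset.sum_congr rfl fun k _ => ?_
      have := hm c
      field_simp
    · simp

end rhs2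
section final

/-- the common deterministic matrix -/
noncomputable def Adiag (n : ℕ) (l1 l2 : ℝ) :
    Matrix (Fin (2*n+1) × Fin 2) (Fin (2*n+1) × Fin 2) ℂ :=
  Matrix.diagonal fun x => (![(l1 : ℂ), (l2 : ℂ)] : Fin 2 → ℂ) x.2

lemma det_L (n : ℕ) (l1 l2 : ℝ) (v : OmL n) :
    (Adiag n l1 l2 + ZL n v).det =
      ((l1 : ℂ) • (1 : Matrix (Fin (2*n+1)) (Fin (2*n+1)) ℂ) - bandH n v.1 v.2).det *
      ((l2 : ℂ) • (1 : Matrix (Fin (2*n+1)) (Fin (2*n+1)) ℂ) - bandH n v.1 v.2).det := by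
  have : Adiag n l1 l2 + ZL n v = Matrix.blockDiagonal (fun a : Fin 2 =>
      (![(l1 : ℂ), (l2 : ℂ)] a) • (1 : Matrix (Fin (2*n+1)) (Fin (2*n+1)) ℂ) - bandH n v.1 v.2) := by
    ext ⟨j, a⟩ ⟨k, b⟩
    simp only [Adiag, ZL, Matrix.add_apply, Matrix.of_apply, Matrix.blockDiagonal_apply,
      Matrix.diagonal_apply, Matrix.sub_apply, Matrix.smul_apply, Matrix.one_apply, Prod.mk.injEq,
      smul_eq_mul]
    by_cases h : a = b
    · subst h
      by_cases h2 : j = k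
      · subst h2; simp; ring
      · simp [h2]
    · simp [h]
  rw [this, Matrix.det_blockDiagonal, Fin.prod_univ_two]
  rfl

lemma F2_eq (n : ℕ) (W l1 l2 : ℝ) : F2 n W l1 l2 = (cL n W : ℂ) *
    ∫ v : OmL n, (Adiag n l1 l2 + ZL n v).det * Complex.exp (qLr n W v : ℂ) := by
  unfold F2
  rw [← integral_const_mul]
  congr 1
  funext v
  rw [det_L, bandDens_eq]
  push_cast
  ring

lemma massL (n : ℕ) (W : ℝ) (hW : 0 < W) :
    (cL n W : ℂ) * ∫ v : OmL n, Complex.exp (qLr n W v : ℂ) = 1 := by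
  rw [← integral_const_mul]
  have h := qLr_mass n W hW
  have := congrArg (fun x : ℝ => (x : ℂ)) h
  rw [Complex.ofReal_one, ← integral_complex_ofReal] at this
  rw [← this]
  congr 1
  funext v
  rw [bandDens_eq]
  push_cast
  ring

/-- the block at site `j` on the `X` side -/
noncomputable def blockR (l1 l2 : ℝ) (d : Fin 4 → ℝ) (x : Fin 4 → ℝ) : Matrix (Fin 2) (Fin 2) ℂ :=
  Matrix.of fun a b => (if a = b then (![(l1 : ℂ), (l2 : ℂ)] : Fin 2 → ℂ) a else 0) +
    Complex.I * ∑ c, sv a b c * ((x c : ℂ) + d c * Complex.I)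

lemma det_R (n : ℕ) (l1 l2 : ℝ) (d : Fin 4 → ℝ) (t : Fin (2*n+1) → Fin 4 → ℝ) :
    (Adiag n l1 l2 + ZR n d t).det = ∏ j, (blockR l1 l2 d (t j)).det := by
  have : Adiag n l1 l2 + ZR n d t = (Matrix.blockDiagonal (fun j : Fin (2*n+1) =>
      blockR l1 l2 d (t j))).submatrix (Equiv.prodComm _ _) (Equiv.prodComm _ _) := by
    ext ⟨j, a⟩ ⟨k, b⟩
    simp only [Adiag, ZR, Matrix.add_apply, Matrix.of_apply, Matrix.blockDiagonal_apply,
      Matrix.diagonal_apply, Prod.mk.injEq, Matrix.submatrix_apply, Equiv.prodComm_apply, Prod.swap,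
      blockR]
    by_cases h : j = k
    · subst h; simp
    · simp [h]
  rw [this, Matrix.det_submatrix_equiv_self, Matrix.det_blockDiagonal]

/-- the shift vector -/
noncomputable def dvec (l0 e1 e2 : ℝ) : Fin 4 → ℝ := ![l0/2 + e1, l0/2 + e2, 0, 0]

lemma mk_eq (a b : ℝ) : (⟨a, b⟩ : ℂ) = (a : ℂ) + b * Complex.I := by
  apply Complex.ext <;> simp

lemma blockR_det (l0 e1 e2 : ℝ) (x : Fin 4 → ℝ) :
    (blockR (l0 + e1) (l0 + e2) (dvec l0 e1 e2) x).det =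
      -(herm2 x - (Complex.I * (l0 : ℂ)/2) • (1 : Matrix (Fin 2) (Fin 2) ℂ)).det := by
  rw [Matrix.det_fin_two, Matrix.det_fin_two]
  have hI : Complex.I ^ 2 = -1 := Complex.I_sq
  simp [blockR, sv, Fin.sum_univ_four, dvec, herm2, mk_eq]
  ring_nf
  simp only [hI, show Complex.I ^ 3 = -Complex.I by rw [pow_succ, hI]; ring,
    show Complex.I ^ 4 = 1 by rw [show Complex.I ^ 4 = (Complex.I^2)^2 by ring, hI]; ring]
  ring

lemma trace_diff (x y : Fin 4 → ℝ) (d : Fin 4 → ℝ) : ((herm2 x - herm2 y)^2).trace =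
    ∑ c, (mv c : ℂ) * (((x c : ℂ) + d c * Complex.I) - ((y c : ℂ) + d c * Complex.I)) ^ 2 := by
  have hI : Complex.I ^ 2 = -1 := Complex.I_sq
  simp [pow_two, Matrix.trace_fin_two, Matrix.mul_apply, herm2, mk_eq, Fin.sum_univ_four, mv,
    Fin.sum_univ_two]
  ring_nf
  simp only [hI]
  ring

lemma trace_shift (l0 ξ₁ ξ₂ r : ℝ) (x : Fin 4 → ℝ) :
    ((herm2 x + (Complex.I * (l0 : ℂ)/2) • (1 : Matrix (Fin 2) (Fin 2) ℂ)
            + (Complex.I / (r : ℂ)) •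
              Matrix.diagonal ![((ξ₁ : ℝ) : ℂ), ((ξ₂ : ℝ) : ℂ)])^2).trace =
    ∑ c, (mv c : ℂ) * ((x c : ℂ) + dvec l0 (ξ₁ / r) (ξ₂ / r) c * Complex.I) ^ 2 := by
  have hI : Complex.I ^ 2 = -1 := Complex.I_sq
  simp [pow_two, Matrix.trace_fin_two, Matrix.mul_apply, herm2, mk_eq, Fin.sum_univ_four, mv,
    Fin.sum_univ_two, dvec]
  ring_nf
  simp only [hI]
  ring

lemma qR_eq (n : ℕ) (W l0 ξ₁ ξ₂ r : ℝ) (t : Fin (2*n+1) → Fin 4 → ℝ) :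
    (-(((W : ℝ) : ℂ)^2/2) * ∑ j ∈ Finset.Ico 1 (2*n+1),
        ((Xseq n t j - Xseq n t (j-1))^2).trace
      - (1/2 : ℂ) * ∑ j ∈ Finset.range (2*n+1),
        ((Xseq n t j + (Complex.I * (l0 : ℂ)/2) • (1 : Matrix (Fin 2) (Fin 2) ℂ)
            + (Complex.I / (r : ℂ)) •
              Matrix.diagonal ![((ξ₁ : ℝ) : ℂ), ((ξ₂ : ℝ) : ℂ)])^2).trace) =
      qR n W (dvec l0 (ξ₁ / r) (ξ₂ / r)) t := by
  set d := dvec l0 (ξ₁ / r) (ξ₂ / r) with hd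
  let y : Fin 4 → ℕ → ℂ := fun c j => if h : j < 2*n+1 then (t ⟨j, h⟩ c : ℂ) + d c * Complex.I else 0
  have hy : ∀ c (j : Fin (2*n+1)), y c j = (t j c : ℂ) + d c * Complex.I := fun c j => by
    simp only [y, dif_pos j.2]
  have hQ := fun c => Kmat_quad Complex.ofRealHom n W (y c)
  simp only [hy, Complex.ofRealHom_eq_coe] at hQ
  unfold qR
  simp only [hQ]
  have e1 : ∑ j ∈ Finset.Ico 1 (2*n+1), ((Xseq n t j - Xseq n t (j-1))^2).trace =
      ∑ j ∈ Finset.Ico 1 (2*n+1), ∑ c, (mv c : ℂ) * (y c j - y c (j - 1)) ^ 2 := by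
    refine Finset.sum_congr rfl fun j hj => ?_
    rw [Finset.mem_Ico] at hj
    have h1 : j < 2*n+1 := hj.2
    have h2 : j - 1 < 2*n+1 := by omega
    simp only [Xseq, dif_pos h1, dif_pos h2, y]
    exact trace_diff _ _ d
  have e2 : ∑ j ∈ Finset.range (2*n+1),
        ((Xseq n t j + (Complex.I * (l0 : ℂ)/2) • (1 : Matrix (Fin 2) (Fin 2) ℂ)
            + (Complex.I / (r : ℂ)) •
              Matrix.diagonal ![((ξ₁ : ℝ) : ℂ), ((ξ₂ : ℝ) : ℂ)])^2).trace =
      ∑ j ∈ Finset.range (2*n+1), ∑ c, (mv c : ℂ) * (y c j) ^ 2 := by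
    refine Finset.sum_congr rfl fun j hj => ?_
    have h1 : j < 2*n+1 := Finset.mem_range.mp hj
    simp only [Xseq, dif_pos h1, y]
    exact trace_shift _ _ _ _ _
  rw [e1, e2, Finset.sum_comm, Finset.sum_comm (s := Finset.range (2*n+1))]
  simp only [mul_add, Finset.sum_add_distrib, ← Finset.mul_sum]
  have e3 : ∀ G : Fin 4 → ℂ, ∑ c, (mv c : ℂ) * ((W : ℂ) ^ 2 * G c) = (W : ℂ) ^ 2 * ∑ c, mv c * G c := by
    intro G
    rw [Finset.mul_sum]
    exact Finset.sum_congr rfl fun c _ => by ring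
  rw [e3]
  ring

lemma G1_eq (n : ℕ) (W l0 ξ₁ ξ₂ : ℝ) (t : Fin (2*n+1) → Fin 4 → ℝ) :
    G1 n W l0 ξ₁ ξ₂ t = -((Adiag n (l0 + ξ₁ / ((2*n+1) * rho l0)) (l0 + ξ₂ / ((2*n+1) * rho l0)) +
      ZR n (dvec l0 (ξ₁ / ((2*n+1) * rho l0)) (ξ₂ / ((2*n+1) * rho l0))) t).det *
      Complex.exp (qR n W (dvec l0 (ξ₁ / ((2*n+1) * rho l0)) (ξ₂ / ((2*n+1) * rho l0))) t)) := by
  unfold G1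
  rw [qR_eq, det_R]
  simp only [blockR_det]
  rw [Finset.prod_neg, Finset.prod_range]
  have h : ∀ j : Fin (2*n+1), Xseq n t j = herm2 (t j) := fun j => by simp only [Xseq, dif_pos j.2]
  simp only [h, Finset.card_univ, Fintype.card_fin]
  rw [Odd.neg_one_pow (⟨n, rfl⟩ : Odd (2*n+1))]
  ring

end final

/-- the integral representation of `F₂` over `N`-tuples of 2×2 Hermitian
matrices; the integral converges absolutely and
`F₂ = −(2π²)^{−N}(det J)^{−2}·∫ … ∏dX_j`. -/
theorem F2_integral_representation (n : ℕ) (W : ℝ) (hW : 0 < W)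
    (l0 : ℝ) (hl0 : l0 ∈ Set.Ioo (-2 : ℝ) 2) (ξ₁ ξ₂ : ℝ) :
    Integrable (G1 n W l0 ξ₁ ξ₂) ∧
    F2 n W (l0 + ξ₁ / ((2*n+1) * rho l0)) (l0 + ξ₂ / ((2*n+1) * rho l0))
      = -(((2 * Real.pi^2 : ℝ) : ℂ))^(-((2*n+1 : ℕ) : ℤ)) *
          (((Jmat n W).det : ℝ) : ℂ)^(-2 : ℤ) *
          ∫ t : Fin (2*n+1) → Fin 4 → ℝ, G1 n W l0 ξ₁ ξ₂ t := by
  set e1 := ξ₁ / ((2*n+1) * rho l0) with he1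
  set e2 := ξ₂ / ((2*n+1) * rho l0) with he2
  set d := dvec l0 e1 e2 with hd
  have hG : G1 n W l0 ξ₁ ξ₂ = fun t => -((Adiag n (l0 + e1) (l0 + e2) + ZR n d t).det *
      Complex.exp (qR n W d t)) := funext fun t => G1_eq n W l0 ξ₁ ξ₂ t
  have key := gauss_det_compare (μ₁ := (volume : Measure (OmL n)))
    (μ₂ := (volume : Measure (Fin (2*n+1) → Fin 4 → ℝ)))
    (fun v => Complex.exp (qLr n W v : ℂ)) (fun t => Complex.exp (qR n W d t))
    (ZL n) (ZR n d) (Adiag n (l0 + e1) (l0 + e2)) (CL n W) (CR n W) (CL_eq_CR n W)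
    (integrable_ZL n W hW) (integrable_ZR n W d) (wick_ZL n W hW) (wick_ZR n W d)
  refine ⟨?_, ?_⟩
  · rw [hG]
    exact (integrable_det _ _ _ (integrable_ZR n W d)).neg
  · have hJ : (Jmat n W).det = ((Kmat n W).det)⁻¹ := by
      have := congrArg Matrix.det (Jmat_mul_Kmat n W)
      rw [Matrix.det_mul, Matrix.det_one] at this
      exact eq_inv_of_mul_eq_one_left this
    have hK : ((Kmat n W).det : ℂ) ≠ 0 := by exact_mod_cast (Kmat_det_pos n W).ne'
    have hm := massL n W hW
    have hpi : ((2 * Real.pi ^ 2 : ℝ) : ℂ) ≠ 0 := by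
      exact_mod_cast (by positivity : (0 : ℝ) < 2 * Real.pi ^ 2).ne'
    rw [F2_eq, hG, integral_neg, hJ]
    rw [qR_mass] at key
    set I1 := ∫ v : OmL n, (Adiag n (l0 + e1) (l0 + e2) + ZL n v).det * Complex.exp (qLr n W v : ℂ)
    set I2 := ∫ t, (Adiag n (l0 + e1) (l0 + e2) + ZR n d t).det * Complex.exp (qR n W d t)
    set M := ∫ v : OmL n, Complex.exp (qLr n W v : ℂ)
    have key2 : (((2 * Real.pi ^ 2) ^ (2*n+1) * ((Kmat n W).det ^ 2)⁻¹ : ℝ) : ℂ) * (cL n W * I1) = I2 := by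
      calc _ = cL n W * ((((2 * Real.pi ^ 2) ^ (2*n+1) * ((Kmat n W).det ^ 2)⁻¹ : ℝ) : ℂ) * I1) := by ring
        _ = (cL n W * M) * I2 := by rw [key]; ring
        _ = I2 := by rw [hm, one_mul]
    have hpi2 : (Real.pi : ℂ) ≠ 0 := by exact_mod_cast Real.pi_ne_zero
    rw [← key2, zpow_neg, zpow_natCast, zpow_neg, show ((2 : ℤ)) = ((2 : ℕ) : ℤ) from rfl, zpow_natCast]
    push_cast
    rw [inv_pow, inv_inv]
    have hp : ((2 : ℂ) * (Real.pi : ℂ) ^ 2) ^ (2*n+1) ≠ 0 := pow_ne_zero _ (by simpa using hpi)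
    generalize ((2 : ℂ) * (Real.pi : ℂ) ^ 2) ^ (2*n+1) = z at hp ⊢
    field_simp
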